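/- arXiv:2207.03778 — 4 statements merged into one kernel-verified Lean document; each statement's English description precedes it below -/
import Mathlib

section
/- Let $K_1,\ldots,K_d \subset \mathbb{R}^d$ be compact connected sets. Suppose that there exist points $a_i, b_i \in K_i$ for $i = 1,\ldots,d$ such that the vectors $a_1 - b_1, \ldots, a_d - b_d$ are linearly independent. Then the arithmetic sum $K_1 + \cdots + K_d$ has non-empty interior. -/
/-!
Choosing coordinates in which `a i - b i` are the standard basis vectors, it suffices to show that
the compact set `S = ∑ i, K i` projects onto the torus `ℝ^d / ℤ^d`: its integer translates then
cover `ℝ^d`, and Baire's theorem applies.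

Inside a neighbourhood of `K i` there is a polygonal path from `b i` to `a i`, whose image in the
torus is a loop homologous to the `i`-th coordinate circle. Adding these `d` loops gives a map from
a `d`-torus of degree one. By Fubini, the Fourier coefficient at `k` of the pushed-forward volume
form is the determinant of a matrix which is the identity if `k = 0` and which, by the fundamental
theorem of calculus along each loop, kills `k` if `k ≠ 0`. So the push-forward is Haar measure, and
the sums of points near the sets `K i` are dense modulo `ℤ^d`.
-/

open MeasureTheory Set Filter Topology
open scoped Pointwise

section PathCurrent

variable {V : Type*} [NormedAddCommGroup V] [NormedSpace ℝ V] [MeasurableSpace V]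

/-- A one-dimensional current of finite mass on `V`, carried by `U`, with boundary `δ_b - δ_a`. It
is encoded by a measure on pairs (position, velocity), so that concatenating paths amounts to adding
measures and needs no reparametrization. -/
structure IsPathCurrent (ν : Measure (V × V)) (U : Set V) (a b : V) : Prop where
  isFiniteMeasure : IsFiniteMeasure ν
  ae_mem : ∀ᵐ z ∂ν, z.1 ∈ U
  integrable_fderiv (f : V → ℂ) (hf : ContDiff ℝ 1 f) :
    Integrable (fun z ↦ fderiv ℝ f z.1 z.2) ν
  integral_fderiv (f : V → ℂ) (hf : ContDiff ℝ 1 f) :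
    ∫ z, fderiv ℝ f z.1 z.2 ∂ν = f b - f a

namespace IsPathCurrent

variable {ν ν' : Measure (V × V)} {U U' : Set V} {a b c : V}

lemma mono (h : IsPathCurrent ν U a b) (hU : U ⊆ U') : IsPathCurrent ν U' a b :=
  { h with ae_mem := h.ae_mem.mono fun _ hz ↦ hU hz }

lemma add (h : IsPathCurrent ν U a b) (h' : IsPathCurrent ν' U b c) :
    IsPathCurrent (ν + ν') U a c where
  isFiniteMeasure :=
    have := h.isFiniteMeasure
    have := h'.isFiniteMeasure
    inferInstance
  ae_mem := ae_add_measure_iff.mpr ⟨h.ae_mem, h'.ae_mem⟩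
  integrable_fderiv f hf := (h.integrable_fderiv f hf).add_measure (h'.integrable_fderiv f hf)
  integral_fderiv f hf := by
    rw [integral_add_measure (h.integrable_fderiv f hf) (h'.integrable_fderiv f hf),
      h.integral_fderiv f hf, h'.integral_fderiv f hf]
    ring

end IsPathCurrent

variable [BorelSpace V] [SecondCountableTopology V]

lemma exists_isPathCurrent_segment (a b : V) : ∃ ν, IsPathCurrent ν (segment ℝ a b) a b := by
  let γ : ℝ → V × V := fun t ↦ (AffineMap.lineMap a b t, b - a)
  have hγ : Continuous γ := by fun_prop
  have cont {f : V → ℂ} (hf : ContDiff ℝ 1 f) : Continuous fun z : V × V ↦ fderiv ℝ f z.1 z.2 :=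
    hf.continuous_fderiv_apply one_ne_zero
  refine ⟨(volume.restrict (Ioc 0 1)).map γ, inferInstance, ?_, fun f hf ↦ ?_, fun f hf ↦ ?_⟩
  · have hclosed : IsClosed (segment ℝ a b) := by
      rw [segment_eq_image_lineMap]
      exact (isCompact_Icc.image (by fun_prop)).isClosed
    rw [ae_map_iff hγ.aemeasurable (measurable_fst hclosed.measurableSet)]
    filter_upwards [ae_restrict_mem measurableSet_Ioc] with t ht
    rw [segment_eq_image_lineMap]
    exact mem_image_of_mem _ (Ioc_subset_Icc_self ht)
  · rw [integrable_map_measure (cont hf).aestronglyMeasurable hγ.aemeasurable]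
    exact ((cont hf).comp hγ).integrableOn_Ioc
  · have deriv_comp (t : ℝ) : HasDerivAt (fun t ↦ f (AffineMap.lineMap a b t))
        (fderiv ℝ f (γ t).1 (γ t).2) t :=
      (hf.differentiable one_ne_zero _).hasFDerivAt.comp_hasDerivAt t AffineMap.hasDerivAt_lineMap
    rw [integral_map hγ.aemeasurable (cont hf).aestronglyMeasurable,
      ← intervalIntegral.integral_of_le zero_le_one,
      intervalIntegral.integral_eq_sub_of_hasDerivAt (fun t _ ↦ deriv_comp t)
        (((cont hf).comp hγ).intervalIntegrable _ _),
      AffineMap.lineMap_apply_one, AffineMap.lineMap_apply_zero]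

lemma exists_isPathCurrent_thickening {K : Set V} (hK : IsPreconnected K) {δ : ℝ}
    (hδ : 0 < δ) {a b : V} (ha : a ∈ K) (hb : b ∈ K) :
    ∃ ν, IsPathCurrent ν (Metric.thickening δ K) a b := by
  refine hK.induction₂' (fun x y ↦ ∃ ν, IsPathCurrent ν (Metric.thickening δ K) x y)
    (fun x hx ↦ ?_) (fun _ _ _ _ _ _ ⟨_, h⟩ ⟨_, h'⟩ ↦ ⟨_, h.add h'⟩) ha hb
  have hx' : x ∈ Metric.ball x δ := Metric.mem_ball_self hδ
  have current_of_mem_ball {y z : V} (hy : y ∈ Metric.ball x δ) (hz : z ∈ Metric.ball x δ) :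
      ∃ ν, IsPathCurrent ν (Metric.thickening δ K) y z :=
    (exists_isPathCurrent_segment y z).imp fun _ h ↦ h.mono <|
      ((convex_ball x δ).segment_subset hy hz).trans (Metric.ball_subset_thickening hx δ)
  filter_upwards [nhdsWithin_le_nhds (Metric.ball_mem_nhds x hδ)] with y hy
  exact ⟨current_of_mem_ball hx' hy, current_of_mem_ball hy hx'⟩

end PathCurrent

section DetPi

variable {ι : Type*} [Fintype ι] [DecidableEq ι] {𝕜 : Type*} [RCLike 𝕜] {X : ι → Type*}
  [∀ i, MeasurableSpace (X i)] {μ : ∀ i, Measure (X i)} [∀ i, SigmaFinite (μ i)]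
  {f : ∀ i, X i → ι → 𝕜}

lemma integrable_pi_det (hf : ∀ i j, Integrable (f i · j) (μ i)) :
    Integrable (fun z ↦ (Matrix.of fun i j ↦ f i (z i) j).det) (Measure.pi μ) := by
  simp only [← Matrix.det_transpose (Matrix.of _), Matrix.det_apply', Matrix.transpose_apply,
    Matrix.of_apply]
  exact integrable_finsetSum _ fun σ _ ↦
    (Integrable.fintype_prod_dep fun i ↦ hf i (σ i)).const_mul _

lemma integral_pi_det (hf : ∀ i j, Integrable (f i · j) (μ i)) :
    ∫ z, (Matrix.of fun i j ↦ f i (z i) j).det ∂Measure.pi μ =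
      (Matrix.of fun i j ↦ ∫ x, f i x j ∂μ i).det := by
  simp only [← Matrix.det_transpose (Matrix.of _), Matrix.det_apply', Matrix.transpose_apply,
    Matrix.of_apply]
  rw [integral_finsetSum _ fun σ _ ↦
    (Integrable.fintype_prod_dep fun i ↦ hf i (σ i)).const_mul _]
  refine Finset.sum_congr rfl fun σ _ ↦ ?_
  rw [integral_const_mul, integral_fintype_prod_eq_prod fun i x ↦ f i x (σ i)]

end DetPi

section Torus

variable {ι : Type*}

/-- The quotient map `ℝ^ι → ℝ^ι / ℤ^ι`. -/
def torusProj (ι : Type*) : (ι → ℝ) →+ UnitAddTorus ι :=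
  (QuotientAddGroup.mk' (AddSubgroup.zmultiples (1 : ℝ))).compLeft ι

lemma torusProj_apply (x : ι → ℝ) (i : ι) : torusProj ι x i = (x i : UnitAddCircle) := rfl

lemma continuous_torusProj : Continuous (torusProj ι) :=
  continuous_pi fun i ↦ (AddCircle.continuous_mk' 1).comp (continuous_apply i)

lemma torusProj_eq_torusProj_iff {x y : ι → ℝ} :
    torusProj ι x = torusProj ι y ↔ ∃ n : ι → ℤ, x = (fun i ↦ (n i : ℝ)) + y := by
  have coord (i : ι) : torusProj ι x i = torusProj ι y i ↔ ∃ n : ℤ, x i = n + y i := by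
    rw [torusProj_apply, torusProj_apply, ← sub_eq_zero, ← AddCircle.coe_sub,
      AddCircle.coe_eq_zero_iff]
    simp only [zsmul_eq_mul, mul_one, eq_comm (b := x i - y i), sub_eq_iff_eq_add]
  simp only [funext_iff, coord, Classical.skolem, Pi.add_apply]

lemma torusProj_single_one [DecidableEq ι] (i : ι) : torusProj ι (Pi.single i 1) = 0 := by
  rw [← map_zero (torusProj ι), torusProj_eq_torusProj_iff]
  refine ⟨Pi.single i 1, funext fun j ↦ ?_⟩
  simp [Pi.single_apply]

lemma interior_nonempty_of_torusProj_image_eq_univ [Finite ι] {S : Set (ι → ℝ)} (hS : IsClosed S)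
    (hproj : torusProj ι '' S = univ) : (interior S).Nonempty := by
  have translates_cover : ⋃ n : ι → ℤ, (fun i ↦ (n i : ℝ)) +ᵥ S = univ := by
    refine eq_univ_of_forall fun x ↦ ?_
    obtain ⟨s, hs, hsx⟩ := hproj.symm ▸ mem_univ (torusProj ι x)
    obtain ⟨n, hn⟩ := torusProj_eq_torusProj_iff.mp hsx.symm
    exact mem_iUnion.mpr ⟨n, s, hs, hn.symm⟩
  obtain ⟨n, hn⟩ := nonempty_interior_of_iUnion_of_closed (fun n ↦ hS.vadd _) translates_cover
  rwa [interior_vadd, vadd_set_nonempty] at hn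

/-- The `j`-th coordinate as a complex-valued function, the type of function against which path
currents are tested. -/
noncomputable def coordCLM (j : ι) : (ι → ℝ) →L[ℝ] ℂ :=
  Complex.ofRealCLM ∘L ContinuousLinearMap.proj j

lemma coordCLM_apply (j : ι) (x : ι → ℝ) : coordCLM j x = (x j : ℂ) := rfl

open UnitAddTorus

variable [Fintype ι]

lemma mFourier_torusProj (k : ι → ℤ) (x : ι → ℝ) :
    mFourier k (torusProj ι x) = Complex.exp (2 * Real.pi * Complex.I * ∑ j, (k j * x j : ℂ)) := by
  simp only [mFourier, ContinuousMap.coe_mk, torusProj_apply, fourier_coe_apply]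
  rw [← Complex.exp_sum, Finset.mul_sum]
  refine congrArg _ (Finset.sum_congr rfl fun j _ ↦ ?_)
  rw [Complex.ofReal_one, div_one, mul_assoc]

lemma mFourier_torusProj_sum {κ : Type*} (s : Finset κ) (k : ι → ℤ) (x : κ → ι → ℝ) :
    mFourier k (torusProj ι (∑ i ∈ s, x i)) = ∏ i ∈ s, mFourier k (torusProj ι (x i)) := by
  simp only [mFourier_torusProj, ← Complex.exp_sum, Finset.sum_apply, Complex.ofReal_sum,
    Finset.mul_sum]
  rw [Finset.sum_comm]

lemma contDiff_mFourier_torusProj (k : ι → ℤ) :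
    ContDiff ℝ 1 fun x ↦ mFourier k (torusProj ι x) := by
  simp only [mFourier_torusProj]
  have (j : ι) : ContDiff ℝ 1 fun x : ι → ℝ ↦ (x j : ℂ) := (coordCLM j).contDiff
  fun_prop

lemma fderiv_mFourier_torusProj (k : ι → ℤ) (x v : ι → ℝ) :
    fderiv ℝ (fun y ↦ mFourier k (torusProj ι y)) x v =
      2 * Real.pi * Complex.I * ∑ j, k j * (mFourier k (torusProj ι x) * v j) := by
  have hcoord (j : ι) : HasFDerivAt (fun y : ι → ℝ ↦ (y j : ℂ)) (coordCLM j) x :=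
    (coordCLM j).hasFDerivAt
  have hphase := (HasFDerivAt.fun_sum (u := Finset.univ)
    fun j _ ↦ (hcoord j).const_mul (k j : ℂ)).const_mul (2 * Real.pi * Complex.I)
  simp only [mFourier_torusProj]
  rw [hphase.cexp.fderiv]
  simp [coordCLM_apply, Finset.mul_sum, mul_left_comm]

lemma integral_mFourier (k : ι → ℤ) :
    ∫ y, mFourier k y = if k = 0 then 1 else 0 := by
  split_ifs with hk
  · simp [hk, mFourier_zero, measureReal_def, volume_pi, Measure.pi_univ]
  · obtain ⟨i, hi⟩ := Function.ne_iff.mp hk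
    simp only [mFourier, ContinuousMap.coe_mk]
    rw [integral_fintype_prod_volume_eq_prod]
    exact Finset.prod_eq_zero (Finset.mem_univ i) <|
      integral_eq_zero_of_add_right_eq_neg (fourier_add_half_inv_index hi one_pos)

section PushForward

variable {X : Type*} [MeasurableSpace X] {μ : Measure X} {D : X → ℂ}

lemma exists_continuousLinearMap_integral_comp_mul {T : Type*} [TopologicalSpace T]
    [CompactSpace T] {g : X → T} (hg : AEStronglyMeasurable g μ) (hD : Integrable D μ) :
    ∃ L : C(T, ℂ) →L[ℂ] ℂ, ∀ φ, L φ = ∫ x, φ (g x) * D x ∂μ := by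
  have hint (φ : C(T, ℂ)) : Integrable (fun x ↦ φ (g x) * D x) μ :=
    hD.bdd_mul (φ.continuous.comp_aestronglyMeasurable hg)
      (Eventually.of_forall fun x ↦ φ.norm_coe_le_norm _)
  let L : C(T, ℂ) →ₗ[ℂ] ℂ :=
    { toFun φ := ∫ x, φ (g x) * D x ∂μ
      map_add' φ ψ := by
        simp only [ContinuousMap.add_apply, add_mul, integral_add (hint φ) (hint ψ)]
      map_smul' c φ := by
        simp only [ContinuousMap.smul_apply, smul_mul_assoc, integral_smul, RingHom.id_apply] }
  refine ⟨L.mkContinuous (∫ x, ‖D x‖ ∂μ) fun φ ↦ ?_, fun φ ↦ rfl⟩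
  rw [mul_comm, ← integral_const_mul]
  refine norm_integral_le_of_norm_le (hD.norm.const_mul _) (Eventually.of_forall fun x ↦ ?_)
  rw [norm_mul]
  gcongr
  exact φ.norm_coe_le_norm _

variable {g : X → UnitAddTorus ι}

lemma integral_comp_mul_eq_integral_of_mFourier (hg : AEStronglyMeasurable g μ)
    (hD : Integrable D μ)
    (hcoeff : ∀ k : ι → ℤ, ∫ x, mFourier k (g x) * D x ∂μ = ∫ y, mFourier k y)
    (φ : C(UnitAddTorus ι, ℂ)) : ∫ x, φ (g x) * D x ∂μ = ∫ y, φ y := by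
  obtain ⟨L, hL⟩ := exists_continuousLinearMap_integral_comp_mul hg hD
  obtain ⟨H, hH⟩ := exists_continuousLinearMap_integral_comp_mul (T := UnitAddTorus ι)
    (μ := volume) aestronglyMeasurable_id (integrable_const (1 : ℂ))
  simp only [id_eq, mul_one] at hH
  have hLH : L = H := by
    refine ContinuousLinearMap.ext_on (s := range mFourier) ?_ ?_
    · rw [Submodule.dense_iff_topologicalClosure_eq_top]
      exact span_mFourier_closure_eq_top
    · rintro _ ⟨k, rfl⟩
      rw [hL, hH, hcoeff]
  rw [← hL, ← hH, hLH]

lemma dense_of_ae_mem_of_mFourier (hg : AEStronglyMeasurable g μ) (hD : Integrable D μ)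
    (hcoeff : ∀ k : ι → ℤ, ∫ x, mFourier k (g x) * D x ∂μ = ∫ y, mFourier k y)
    {S : Set (UnitAddTorus ι)} (hS : ∀ᵐ x ∂μ, g x ∈ S) : Dense S := by
  by_contra hdense
  obtain ⟨y, hy⟩ : ∃ y, y ∉ closure S := by simpa only [Dense, not_forall] using hdense
  obtain ⟨f, hfS, hfy, hf⟩ := exists_continuous_zero_one_of_isClosed isClosed_closure
    (isClosed_singleton (x := y)) (disjoint_singleton_right.mpr hy)
  have hpos : 0 < ∫ x, f x :=
    f.continuous.integral_pos_of_hasCompactSupport_nonneg_nonzero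
      (HasCompactSupport.of_compactSpace _) (fun x ↦ (hf x).1) ((hfy rfl).trans_ne one_ne_zero)
  have hzero : ∫ x, (f (g x) : ℂ) * D x ∂μ = 0 := by
    refine integral_eq_zero_of_ae (hS.mono fun x hx ↦ ?_)
    simp [hfS (subset_closure hx)]
  have heq : ∫ x, (f (g x) : ℂ) * D x ∂μ = ∫ y, (f y : ℂ) :=
    integral_comp_mul_eq_integral_of_mFourier hg hD hcoeff ⟨fun y ↦ f y, by fun_prop⟩
  rw [hzero, integral_complex_ofReal] at heq
  exact hpos.ne (by exact_mod_cast heq)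

end PushForward

namespace IsPathCurrent

section Coefficient

variable {ν : Measure ((ι → ℝ) × (ι → ℝ))} {U : Set (ι → ℝ)} {a b : ι → ℝ}

lemma integrable_apply (h : IsPathCurrent ν U a b) (j : ι) :
    Integrable (fun z ↦ (z.2 j : ℂ)) ν := by
  simpa only [ContinuousLinearMap.fderiv, coordCLM_apply] using
    h.integrable_fderiv (coordCLM j) (coordCLM j).contDiff

lemma integral_apply (h : IsPathCurrent ν U a b) (j : ι) :
    ∫ z, (z.2 j : ℂ) ∂ν = b j - a j := by
  simpa only [ContinuousLinearMap.fderiv, coordCLM_apply] using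
    h.integral_fderiv (coordCLM j) (coordCLM j).contDiff

lemma integrable_mFourier_mul_apply (h : IsPathCurrent ν U a b) (k : ι → ℤ) (j : ι) :
    Integrable (fun z ↦ mFourier k (torusProj ι z.1) * (z.2 j : ℂ)) ν :=
  (h.integrable_apply j).bdd_mul
    ((mFourier k).continuous.comp (continuous_torusProj.comp continuous_fst)).aestronglyMeasurable
    (Eventually.of_forall fun _ ↦ (mFourier k).norm_coe_le_norm _)

lemma sum_mul_integral_mFourier_mul_apply (h : IsPathCurrent ν U a b) (k : ι → ℤ) :
    2 * Real.pi * Complex.I * ∑ j, k j * ∫ z, mFourier k (torusProj ι z.1) * (z.2 j : ℂ) ∂ν =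
      mFourier k (torusProj ι b) - mFourier k (torusProj ι a) := by
  rw [← h.integral_fderiv _ (contDiff_mFourier_torusProj k)]
  simp only [fderiv_mFourier_torusProj]
  rw [integral_const_mul, integral_finsetSum _ fun j _ ↦
    (h.integrable_mFourier_mul_apply k j).const_mul _]
  simp only [integral_const_mul]

end Coefficient

variable [DecidableEq ι] {ν : ι → Measure ((ι → ℝ) × (ι → ℝ))} {U : ι → Set (ι → ℝ)}
  {a b : ι → ι → ℝ}

lemma det_integral_mFourier_mul_apply (h : ∀ i, IsPathCurrent (ν i) (U i) (a i) (b i))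
    (hab : ∀ i, b i - a i = Pi.single i 1) (k : ι → ℤ) :
    (Matrix.of fun i j ↦ ∫ z, mFourier k (torusProj ι z.1) * (z.2 j : ℂ) ∂ν i).det =
      if k = 0 then 1 else 0 := by
  split_ifs with hk
  · suffices (Matrix.of fun i j ↦ ∫ z, mFourier k (torusProj ι z.1) * (z.2 j : ℂ) ∂ν i) = 1 by
      rw [this, Matrix.det_one]
    ext i j
    simp only [hk, mFourier_zero, ContinuousMap.one_apply, one_mul, Matrix.of_apply,
      (h i).integral_apply, Matrix.one_apply]
    rw [← Complex.ofReal_sub, ← Pi.sub_apply, hab, Pi.single_apply]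
    split_ifs <;> simp_all
  · refine Matrix.exists_mulVec_eq_zero_iff.mp ⟨fun j ↦ k j, ?_, funext fun i ↦ ?_⟩
    · simpa only [ne_eq, funext_iff, Pi.zero_apply, Int.cast_eq_zero] using hk
    · have loop : torusProj ι (b i) = torusProj ι (a i) := by
        rw [← sub_eq_zero, ← map_sub, hab, torusProj_single_one]
      have hsum := (h i).sum_mul_integral_mFourier_mul_apply k
      rw [loop, sub_self] at hsum
      simpa only [Matrix.mulVec, dotProduct, Matrix.of_apply, mul_comm, Pi.zero_apply] using
        (mul_eq_zero.mp hsum).resolve_left Complex.two_pi_I_ne_zero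

lemma dense_torusProj_image_sum (h : ∀ i, IsPathCurrent (ν i) (U i) (a i) (b i))
    (hab : ∀ i, b i - a i = Pi.single i 1) : Dense (torusProj ι '' ∑ i, U i) := by
  have (i : ι) : IsFiniteMeasure (ν i) := (h i).isFiniteMeasure
  have continuous_sum_position : Continuous fun z : ι → (ι → ℝ) × (ι → ℝ) ↦
      torusProj ι (∑ i, (z i).1) := continuous_torusProj.comp (by fun_prop)
  have integrable_volume_form : Integrable
      (fun z : ι → (ι → ℝ) × (ι → ℝ) ↦ (Matrix.of fun i j ↦ ((z i).2 j : ℂ)).det)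
      (Measure.pi ν) :=
    integrable_pi_det (f := fun _ (z : (ι → ℝ) × (ι → ℝ)) j ↦ (z.2 j : ℂ))
      fun i j ↦ (h i).integrable_apply j
  refine dense_of_ae_mem_of_mFourier continuous_sum_position.aestronglyMeasurable
    integrable_volume_form (fun k ↦ ?_) ?_
  · simp only [mFourier_torusProj_sum, ← Matrix.det_mul_column, Matrix.of_apply]
    rw [integral_pi_det
      (f := fun _ (z : (ι → ℝ) × (ι → ℝ)) j ↦ mFourier k (torusProj ι z.1) * (z.2 j : ℂ))
      fun i j ↦ (h i).integrable_mFourier_mul_apply k j,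
      det_integral_mFourier_mul_apply h hab, integral_mFourier]
  · have ae_mem_pi : ∀ᵐ z ∂Measure.pi ν, ∀ i, (z i).1 ∈ U i := ae_all_iff.mpr fun i ↦
      (Measure.quasiMeasurePreserving_eval ν i).ae (h i).ae_mem
    filter_upwards [ae_mem_pi] with z hz
    exact mem_image_of_mem _ (finsetSum_mem_finsetSum _ _ _ fun i _ ↦ hz i)

end IsPathCurrent

end Torus

section SumOfConnected

variable {ι : Type*} [Fintype ι]

lemma isCompact_fintype_sum {M : Type*} [AddCommMonoid M] [TopologicalSpace M] [ContinuousAdd M]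
    {K : ι → Set M} (hK : ∀ i, IsCompact (K i)) : IsCompact (∑ i, K i) := by
  rw [← image_fintype_sum_pi]
  exact (isCompact_univ_pi hK).image (by fun_prop)

lemma exists_thickening_sum_subset_of_isOpen {M : Type*} [AddCommMonoid M] [PseudoMetricSpace M]
    [ContinuousAdd M] {K : ι → Set M} (hK : ∀ i, IsCompact (K i)) {O : Set M} (hO : IsOpen O)
    (hKO : ∑ i, K i ⊆ O) : ∃ δ > 0, ∑ i, Metric.thickening δ (K i) ⊆ O := by
  have hcont : Continuous fun c : ι → M ↦ ∑ i, c i := by fun_prop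
  simp only [← image_fintype_sum_pi, image_subset_iff] at hKO ⊢
  obtain ⟨δ, hδ, hsub⟩ :=
    (isCompact_univ_pi hK).exists_thickening_subset_open (hO.preimage hcont) hKO
  refine ⟨δ, hδ, fun c hc ↦ hsub ?_⟩
  choose x hxK hcx using fun i ↦ Metric.mem_thickening_iff.mp (hc i (mem_univ i))
  exact Metric.mem_thickening_iff.mpr ⟨x, fun i _ ↦ hxK i, (dist_pi_lt_iff hδ).mpr hcx⟩

lemma interior_sum_nonempty_of_injective {G κ : Type*} [AddCommGroup G] [TopologicalSpace G]
    [IsTopologicalAddGroup G] [Fintype κ] {f : κ → ι} (hf : Function.Injective f) {K : ι → Set G}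
    (hK : ∀ i, (K i).Nonempty) (hint : (interior (∑ j, K (f j))).Nonempty) :
    (interior (∑ i, K i)).Nonempty := by
  classical
  have hrest : (∑ i ∈ Finset.univ \ Finset.univ.image f, K i).Nonempty := by
    choose x hx using hK
    exact ⟨_, finsetSum_mem_finsetSum _ _ _ fun i _ ↦ hx i⟩
  rw [← Finset.sum_sdiff (Finset.subset_univ (Finset.univ.image f)),
    Finset.sum_image fun _ _ _ _ h ↦ hf h]
  exact (hrest.add hint).mono subset_interior_add_right

lemma torusProj_image_sum_eq_univ [DecidableEq ι] {K : ι → Set (ι → ℝ)}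
    (hcpt : ∀ i, IsCompact (K i)) (hconn : ∀ i, IsPreconnected (K i)) {a b : ι → ι → ℝ}
    (ha : ∀ i, a i ∈ K i) (hb : ∀ i, b i ∈ K i) (hab : ∀ i, b i - a i = Pi.single i 1) :
    torusProj ι '' ∑ i, K i = univ := by
  have himage : IsCompact (torusProj ι '' ∑ i, K i) :=
    (isCompact_fintype_sum hcpt).image continuous_torusProj
  refine eq_univ_of_forall fun y ↦ by_contra fun hy ↦ ?_
  obtain ⟨O, hO, hKO, hyO⟩ := himage.exists_isOpen_closure_subset <|
    isOpen_compl_singleton.mem_nhdsSet.mpr (subset_compl_singleton_iff.mpr hy)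
  obtain ⟨δ, hδ, hδO⟩ := exists_thickening_sum_subset_of_isOpen hcpt
    (hO.preimage continuous_torusProj) (image_subset_iff.mp hKO)
  choose ν hν using fun i ↦ exists_isPathCurrent_thickening (hconn i) hδ (ha i) (hb i)
  have hdense : Dense O :=
    (IsPathCurrent.dense_torusProj_image_sum hν hab).mono (image_subset_iff.mpr hδO)
  exact hyO (hdense y) rfl

lemma interior_sum_nonempty_of_basis {E : Type*} [AddCommGroup E] [Module ℝ E] [TopologicalSpace E]
    [IsTopologicalAddGroup E] [ContinuousSMul ℝ E] [T2Space E] (B : Module.Basis ι ℝ E)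
    {K : ι → Set E} (hcpt : ∀ i, IsCompact (K i)) (hconn : ∀ i, IsPreconnected (K i))
    {a b : ι → E} (ha : ∀ i, a i ∈ K i) (hb : ∀ i, b i ∈ K i) (hB : ∀ i, B i = a i - b i) :
    (interior (∑ i, K i)).Nonempty := by
  classical
  have : FiniteDimensional ℝ E := B.finiteDimensional_of_finite
  let e : E ≃L[ℝ] (ι → ℝ) := B.equivFun.toContinuousLinearEquiv
  have hcpt' (i : ι) : IsCompact (e '' K i) := (hcpt i).image e.continuous
  have hab (i : ι) : e (a i) - e (b i) = Pi.single i 1 := by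
    rw [← map_sub, ← hB]
    exact funext fun j ↦ by simp [e, Pi.single_apply, eq_comm]
  have hproj : torusProj ι '' ∑ i, e '' K i = univ :=
    torusProj_image_sum_eq_univ hcpt' (fun i ↦ (hconn i).image e e.continuous.continuousOn)
      (fun i ↦ mem_image_of_mem e (hb i)) (fun i ↦ mem_image_of_mem e (ha i)) hab
  have hint : (interior (∑ i, e '' K i)).Nonempty :=
    interior_nonempty_of_torusProj_image_eq_univ (isCompact_fintype_sum hcpt').isClosed hproj
  rw [← image_finsetSum, ← e.coe_toHomeomorph, ← e.toHomeomorph.image_interior] at hint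
  exact hint.of_image

end SumOfConnected

theorem sum_of_compact_connected_has_nonempty_interior_general
    {ι E : Type*} [Fintype ι] [AddCommGroup E] [Module ℝ E] [TopologicalSpace E]
    [IsTopologicalAddGroup E] [ContinuousSMul ℝ E] [T2Space E] {K : ι → Set E}
    (hcpt : ∀ i, IsCompact (K i)) (hconn : ∀ i, IsPreconnected (K i)) {a b : ι → E}
    (ha : ∀ i, a i ∈ K i) (hb : ∀ i, b i ∈ K i)
    (hspan : Submodule.span ℝ (range fun i ↦ a i - b i) = ⊤) :
    (interior (∑ i, K i)).Nonempty := by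
  obtain ⟨κ, f, hf, hspan_f, hli⟩ := exists_linearIndependent' ℝ fun i ↦ a i - b i
  have : Fintype κ := Fintype.ofInjective f hf
  let B : Module.Basis κ ℝ E := Module.Basis.mk hli (hspan_f.trans hspan).ge
  refine interior_sum_nonempty_of_injective hf (fun i ↦ ⟨a i, ha i⟩) ?_
  exact interior_sum_nonempty_of_basis B (fun j ↦ hcpt (f j)) (fun j ↦ hconn (f j))
    (fun j ↦ ha (f j)) (fun j ↦ hb (f j)) fun j ↦ Module.Basis.mk_apply _ _ j

/-- **Theorem (Banakh–Jabłońska–Jabłoński).**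
Let `K 1, …, K d ⊂ ℝ^d` be compact connected sets. Suppose that there exist points
`a i, b i ∈ K i` such that the vectors `a 1 - b 1, …, a d - b d` are linearly independent.
Then the arithmetic sum `K 1 + ⋯ + K d` has non-empty interior. -/
theorem sum_of_compact_connected_has_nonempty_interior
    (d : ℕ) (K : Fin d → Set (EuclideanSpace ℝ (Fin d)))
    (hcpt : ∀ i, IsCompact (K i)) (hconn : ∀ i, IsConnected (K i))
    (a b : Fin d → EuclideanSpace ℝ (Fin d))
    (ha : ∀ i, a i ∈ K i) (hb : ∀ i, b i ∈ K i)
    (hli : LinearIndependent ℝ (fun i => a i - b i)) :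
    (interior {x : EuclideanSpace ℝ (Fin d) |
      ∃ c : Fin d → EuclideanSpace ℝ (Fin d), (∀ i, c i ∈ K i) ∧ x = ∑ i, c i}).Nonempty := by
  have hspan := hli.span_eq_top_of_card_eq_finrank' (by simp)
  have hsum : {x | ∃ c : Fin d → EuclideanSpace ℝ (Fin d), (∀ i, c i ∈ K i) ∧ x = ∑ i, c i} =
      ∑ i, K i := by
    ext x
    simp only [mem_ofPred_eq, mem_fintype_sum, exists_prop, eq_comm (a := x)]
  rw [hsum]
  exact sum_of_compact_connected_has_nonempty_interior_general hcpt
    (fun i ↦ (hconn i).isPreconnected) ha hb hspan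
end

section
/- Let $E, F \subset \mathbb{R}^2$ be connected sets each with cardinality greater than $1$. If $F$ is compact and $F$ is not a line segment (i.e., $F$ is not of the form $\{(1-t)a + tb : t \in [0,1]\}$ for points $a, b \in \mathbb{R}^2$), then the arithmetic sum $E + F = \{x + y : x \in E, y \in F\}$ has non-empty interior. -/
open Pointwise

/-!
Two connected planar sets meet if one reaches beyond the other on the left and on the right while
the other reaches beyond it below and above. This comes from the zero of a vector field on a square
that points outwards on every side, which is found by comparing arguments along the boundary.

Put `K = -F`, so that `E + F = E - K`. As `F` is not a segment, linear coordinates can be chosen in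
which `K - K` contains `(1, 0)` and `(0, 1)`. The chain of translates `(i, 0) + K` then meets every
vertical chain `c + (0, j) + K`, so the translates of `K - K` by `ℤ²` cover the plane and `K - K`
has interior points by Baire's theorem. In new coordinates `(1, 0)` and `(0, 1)` are interior to
`K - K`, so the chains survive small perturbations: the sets `z p + K`, with `z p` close to the
lattice points `p` of a wide square annulus, form a barrier around the origin.

If `E - K` had empty interior, every point could be perturbed out of any translate of it. For
`0, v ∈ E`, perturbing the centres `z p` step by step keeps the barrier off a path that follows `E`,
then `v + E`, then `2 v + E`, and so on, until it has left the annulus: a contradiction.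
-/

open Set Metric unitInterval

theorem isSimplyConnected_univ {X : Type*} [TopologicalSpace X] [SimplyConnectedSpace X] :
    IsSimplyConnected (univ : Set X) :=
  (Homeomorph.Set.univ X).toHomotopyEquiv.simplyConnectedSpace

theorem exists_continuous_exp_eq {g : I × I → ℂ} (hg : Continuous g) (hg₀ : ∀ p, g p ≠ 0) :
    ∃ F : I × I → ℂ, Continuous F ∧ ∀ p, Complex.exp (F p) = g p := by
  let ρ : ℝ × ℝ → I × I := Prod.map (projIcc 0 1 zero_le_one) (projIcc 0 1 zero_le_one)
  have hρ : Continuous ρ := continuous_projIcc.prodMap continuous_projIcc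
  obtain ⟨F, hF, hFg⟩ := Complex.exists_continuousOn_eqOn_exp_comp isSimplyConnected_univ
    isOpen_univ (hg.comp hρ).continuousOn (by rintro ⟨p, -, hp⟩; exact hg₀ _ hp)
  refine ⟨fun p => F (p.1, p.2), (continuousOn_univ.1 hF).comp (by fun_prop), fun p => ?_⟩
  simpa [ρ] using hFg (mem_univ ((p.1 : ℝ), (p.2 : ℝ)))

theorem im_sub_arg_exp_eq {X : Type*} [TopologicalSpace X] {S : Set X} (hS : IsPreconnected S)
    {F : X → ℂ} (hF : ContinuousOn F S) (hslit : ∀ x ∈ S, Complex.exp (F x) ∈ Complex.slitPlane)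
    {x y : X} (hx : x ∈ S) (hy : y ∈ S) :
    (F x).im - (Complex.exp (F x)).arg = (F y).im - (Complex.exp (F y)).arg := by
  refine hS.constant_of_mapsTo (T := AddSubgroup.zmultiples (2 * Real.pi))
    (f := fun x => (F x).im - (Complex.exp (F x)).arg)
    (SetLike.isDiscrete_iff_discreteTopology.2 inferInstance) ?_ (fun x _ => ?_) hx hy
  · exact (Complex.continuous_im.comp_continuousOn hF).sub fun x hx =>
      (Complex.continuousAt_arg (hslit x hx)).comp_continuousWithinAt
        (f := fun x => Complex.exp (F x)) (hF x hx).cexp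
  · exact ⟨toIocDiv Real.two_pi_pos (-Real.pi) (F x).im, by
      simp [Complex.arg_exp, self_sub_toIocMod]⟩

theorem exists_eq_zero_of_opposite_signs {f g : I × I → ℝ} (hf : Continuous f)
    (hg : Continuous g) (hleft : ∀ t, f (0, t) < 0) (hright : ∀ t, 0 < f (1, t))
    (hbottom : ∀ s, g (s, 0) < 0) (htop : ∀ s, 0 < g (s, 1)) : ∃ p, f p = 0 ∧ g p = 0 := by
  by_contra! hfg
  obtain ⟨F, hF, hFexp⟩ := exists_continuous_exp_eq
    (g := fun p => Complex.equivRealProdCLM.symm (f p, g p)) (by fun_prop) fun p hp =>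
      hfg p (by simpa using congrArg Complex.re hp) (by simpa using congrArg Complex.im hp)
  -- `f + i g` avoids the negative real axis on the bottom, right and top sides, and its negative
  -- does so on the left side: the two changes of argument from `(0, 0)` to `(0, 1)` differ by `2π`.
  have hsides : IsPreconnected (univ ×ˢ {0} ∪ {1} ×ˢ univ ∪ univ ×ˢ {1} : Set (I × I)) :=
    ((isPreconnected_univ.prod isPreconnected_singleton).union (1, 0) (by simp) (by simp)
      (isPreconnected_singleton.prod isPreconnected_univ)).union (1, 1) (by simp) (by simp)
      (isPreconnected_univ.prod isPreconnected_singleton)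
  have hthree := im_sub_arg_exp_eq hsides hF.continuousOn (x := (0, 0)) (y := (0, 1)) (by
    rintro ⟨s, t⟩ ((⟨-, rfl⟩ | ⟨rfl, -⟩) | ⟨-, rfl⟩) <;>
      simp [Complex.mem_slitPlane_iff, hFexp, hright, (hbottom _).ne, (htop _).ne'])
    (by simp) (by simp)
  have hone := im_sub_arg_exp_eq (isPreconnected_singleton.prod isPreconnected_univ)
    (S := {(0 : I)} ×ˢ (univ : Set I))
    (F := fun p => F p + Real.pi * Complex.I) (by fun_prop) (x := (0, 0)) (y := (0, 1)) (by
      rintro ⟨s, t⟩ ⟨rfl, -⟩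
      simp [Complex.exp_add, Complex.mem_slitPlane_iff, hFexp, hleft]) (by simp) (by simp)
  simp only [hFexp, Complex.exp_add, Complex.exp_pi_mul_I, mul_neg, mul_one, mul_zero, add_zero,
    Complex.add_im, Complex.mul_im, Complex.ofReal_re, Complex.ofReal_im, Complex.I_re,
    Complex.I_im, Complex.equivRealProdCLM_symm_apply_im, hbottom, htop,
    Complex.arg_neg_eq_arg_add_pi_of_im_neg, Complex.arg_neg_eq_arg_sub_pi_of_im_pos]
    at hthree hone
  linarith [Real.pi_pos]

theorem joinedIn_of_isPreconnected {X : Type*} [TopologicalSpace X] [LocallyPathConnectedSpace X]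
    {U S : Set X} (hU : IsOpen U) (hS : IsPreconnected S) (hSU : S ⊆ U) {x y : X} (hx : x ∈ S)
    (hy : y ∈ S) : JoinedIn U x y := by
  have hpath : IsPathConnected (connectedComponentIn U x) :=
    hU.connectedComponentIn.isConnected_iff_isPathConnected.1
      (isConnected_connectedComponentIn_iff.2 (hSU hx))
  exact (hpath.joinedIn x (mem_connectedComponentIn (hSU hx)) y
    (hS.subset_connectedComponentIn hx hSU hy)).mono (connectedComponentIn_subset U x)

theorem exists_path_eq_path {a₀ a₁ b₀ b₁ : ℝ × ℝ} (α : Path a₀ a₁) (β : Path b₀ b₁)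
    (hleft : ∀ t, a₀.1 < (β t).1) (hright : ∀ t, (β t).1 < a₁.1)
    (hbelow : ∀ s, b₀.2 < (α s).2) (habove : ∀ s, (α s).2 < b₁.2) : ∃ s t, α s = β t := by
  obtain ⟨⟨s, t⟩, h₁, h₂⟩ := exists_eq_zero_of_opposite_signs
    (f := fun p => (α p.1).1 - (β p.2).1) (g := fun p => (β p.2).2 - (α p.1).2)
    (by fun_prop) (by fun_prop) (by simpa using hleft) (by simpa using hright)
    (by simpa using hbelow) (by simpa using habove)
  exact ⟨s, t, Prod.ext (sub_eq_zero.1 h₁) (sub_eq_zero.1 h₂).symm⟩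

theorem inter_nonempty_of_crossing {A B : Set (ℝ × ℝ)} (hA : IsPreconnected A)
    (hB : IsPreconnected B) (hBclosed : IsClosed B)
    (hleft : ∃ a ∈ A, ∀ b ∈ B, a.1 < b.1) (hright : ∃ a ∈ A, ∀ b ∈ B, b.1 < a.1)
    (hbelow : ∃ b ∈ B, ∀ a ∈ A, b.2 < a.2) (habove : ∃ b ∈ B, ∀ a ∈ A, a.2 < b.2) :
    (A ∩ B).Nonempty := by
  obtain ⟨a₀, ha₀, hleft⟩ := hleft
  obtain ⟨a₁, ha₁, hright⟩ := hright
  obtain ⟨b₀, hb₀, hbelow⟩ := hbelow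
  obtain ⟨b₁, hb₁, habove⟩ := habove
  by_contra hAB
  have hAB : Disjoint A B := disjoint_iff_inter_eq_empty.2 (not_nonempty_iff_eq_empty.1 hAB)
  obtain ⟨α, hα⟩ := joinedIn_of_isPreconnected
    (hBclosed.isOpen_compl.inter (isOpen_Ioo.preimage continuous_snd)) hA
    (fun a ha => ⟨hAB.notMem_of_mem_left ha, hbelow a ha, habove a ha⟩) ha₀ ha₁
  have hαB : ∀ b ∈ B, b ∉ range α := by
    rintro _ hb ⟨t, rfl⟩
    exact (hα t).1 hb
  obtain ⟨β, hβ⟩ := joinedIn_of_isPreconnected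
    ((isCompact_range α.continuous).isClosed.isOpen_compl.inter
      (isOpen_Ioo.preimage continuous_fst))
    hB (fun b hb => ⟨hαB b hb, hleft b hb, hright b hb⟩) hb₀ hb₁
  obtain ⟨s, t, hst⟩ := exists_path_eq_path α β (fun t => (hβ t).2.1) (fun t => (hβ t).2.2)
    (fun s => (hα s).2.1) (fun s => (hα s).2.2)
  exact (hβ t).1 ⟨s, hst⟩

theorem isPreconnected_image_add {V : Type*} [AddGroup V] [TopologicalSpace V] [ContinuousAdd V]
    {K : Set V} (hK : IsPreconnected K) {S : Set ℤ} (hS : S.OrdConnected) {z : ℤ → V}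
    (hz : ∀ i ∈ S, i + 1 ∈ S → -z i + z (i + 1) ∈ K - K) : IsPreconnected (z '' S + K) := by
  rw [← vadd_eq_add, ← iUnion_vadd_set, biUnion_image]
  refine IsPreconnected.biUnion_of_chain hS (fun i _ => ?_) fun i hi hi' => ?_
  · exact hK.image _ (continuous_const_vadd _).continuousOn
  · obtain ⟨k, hk, k', hk', h⟩ := hz i hi hi'
    refine ⟨z i + k, ⟨k, hk, rfl⟩, k', hk', ?_⟩
    have h : k = -z i + z (i + 1) + k' := sub_eq_iff_eq_add.1 h
    simp [h, ← add_assoc]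

section

variable {A K : Set (ℝ × ℝ)} {z : ℤ → ℝ × ℝ} {C : ℝ} {n : ℕ}

theorem inter_verticalChain_nonempty (hA : IsPreconnected A) (hK : IsConnected K)
    (hKc : IsCompact K)
    (hstep : ∀ i ∈ Icc (-n : ℤ) n, i + 1 ∈ Icc (-n : ℤ) n → z (i + 1) - z i ∈ K - K) {x : ℝ}
    (hbound : ∀ i ∈ Icc (-n : ℤ) n, ∀ k ∈ K, ‖z i + k - (x, (i : ℝ))‖ ≤ C)
    (hleft : ∃ a ∈ A, a.1 < x - C) (hright : ∃ a ∈ A, x + C < a.1)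
    (hheight : ∀ a ∈ A, |a.2| < n - C) : (A ∩ (z '' Icc (-n : ℤ) n + K)).Nonempty := by
  obtain ⟨k, hk⟩ := hK.nonempty
  obtain ⟨a₀, ha₀, hleft⟩ := hleft
  obtain ⟨a₁, ha₁, hright⟩ := hright
  have hbound' : ∀ i ∈ Icc (-n : ℤ) n, ∀ k ∈ K,
      |(z i + k).1 - x| ≤ C ∧ |(z i + k).2 - i| ≤ C := fun i hi k hk =>
    max_le_iff.1 (hbound i hi k hk)
  have hwidth : ∀ w ∈ z '' Icc (-n : ℤ) n + K, |w.1 - x| ≤ C := by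
    rintro _ ⟨_, ⟨i, hi, rfl⟩, k, hk, rfl⟩
    exact (hbound' i hi k hk).1
  have hends : -(n : ℤ) ∈ Icc (-n : ℤ) n ∧ (n : ℤ) ∈ Icc (-n : ℤ) n := by simp
  refine inter_nonempty_of_crossing hA
    (isPreconnected_image_add hK.isPreconnected ordConnected_Icc
      (by simpa only [neg_add_eq_sub] using hstep))
    (((finite_Icc _ _).image z).isCompact.add hKc).isClosed
    ⟨a₀, ha₀, fun w hw => ?_⟩ ⟨a₁, ha₁, fun w hw => ?_⟩
    ⟨z (-n) + k, add_mem_add (mem_image_of_mem z hends.1) hk, fun a ha => ?_⟩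
    ⟨z n + k, add_mem_add (mem_image_of_mem z hends.2) hk, fun a ha => ?_⟩
  · linarith [abs_le.1 (hwidth w hw)]
  · linarith [abs_le.1 (hwidth w hw)]
  · have h := (abs_le.1 (hbound' _ hends.1 k hk).2).2
    push_cast at h
    linarith [abs_lt.1 (hheight a ha)]
  · have h := (abs_le.1 (hbound' _ hends.2 k hk).2).1
    push_cast at h
    linarith [abs_lt.1 (hheight a ha)]

theorem inter_horizontalChain_nonempty (hA : IsPreconnected A) (hK : IsConnected K)
    (hKc : IsCompact K)
    (hstep : ∀ i ∈ Icc (-n : ℤ) n, i + 1 ∈ Icc (-n : ℤ) n → z (i + 1) - z i ∈ K - K) {y : ℝ}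
    (hbound : ∀ i ∈ Icc (-n : ℤ) n, ∀ k ∈ K, ‖z i + k - ((i : ℝ), y)‖ ≤ C)
    (hbelow : ∃ a ∈ A, a.2 < y - C) (habove : ∃ a ∈ A, y + C < a.2)
    (hwidth : ∀ a ∈ A, |a.1| < n - C) : (A ∩ (z '' Icc (-n : ℤ) n + K)).Nonempty := by
  let τ : (ℝ × ℝ) ≃+ (ℝ × ℝ) := AddEquiv.prodComm
  have hτ : Continuous τ := continuous_swap
  have h := inter_verticalChain_nonempty (hA.image τ hτ.continuousOn)
    (hK.image τ hτ.continuousOn) (hKc.image hτ) (z := τ ∘ z) (x := y) (C := C) (n := n)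
    (fun i hi hi' => by
      rw [← image_sub, Function.comp_apply, Function.comp_apply, ← map_sub]
      exact mem_image_of_mem τ (hstep i hi hi'))
    (fun i hi => by
      rintro _ ⟨k, hk, rfl⟩
      simpa [τ, Prod.norm_def, max_comm] using hbound i hi k hk)
    (exists_mem_image.2 hbelow) (exists_mem_image.2 habove) (forall_mem_image.2 hwidth)
  rwa [image_comp, ← image_add, ← image_inter τ.injective, image_nonempty] at h

end

theorem interior_nonempty_of_add_eq_univ {V : Type*} [AddGroup V] [TopologicalSpace V]
    [ContinuousAdd V] [BaireSpace V] {S T : Set V} (hS : S.Countable)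
    (hT : IsClosed T) (hST : S + T = univ) : (interior T).Nonempty := by
  have := hS.to_subtype
  rw [← vadd_eq_add, ← iUnion_vadd_set, biUnion_eq_iUnion] at hST
  obtain ⟨s, hs⟩ := nonempty_interior_of_iUnion_of_closed (fun s : S => hT.vadd s.1) hST
  rwa [interior_vadd, vadd_set_nonempty] at hs

/-- The inclusion of the integer lattice `ℤ²` into the plane. -/
def latticePoint (p : ℤ × ℤ) : ℝ × ℝ := (p.1, p.2)

theorem interior_sub_self_nonempty_of_unit_vectors {K : Set (ℝ × ℝ)} (hK : IsConnected K)
    (hKc : IsCompact K) (hhorizontal : (1, 0) ∈ K - K) (hvertical : (0, 1) ∈ K - K) :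
    (interior (K - K)).Nonempty := by
  obtain ⟨D, hD⟩ := hKc.isBounded.exists_norm_le
  refine interior_nonempty_of_add_eq_univ (countable_range latticePoint)
    (by simpa only [sub_eq_add_neg] using (hKc.add hKc.neg).isClosed)
    (eq_univ_of_forall fun c => ?_)
  obtain ⟨n, hn⟩ := exists_nat_gt (2 * ‖c‖ + 2 * D)
  have hcoord : ∀ k ∈ K, |k.1| ≤ D ∧ |k.2| ≤ D := fun k hk => max_le_iff.1 (hD k hk)
  obtain ⟨k₀, hk₀⟩ := hK.nonempty
  let row : Set (ℝ × ℝ) := (fun i : ℤ => ((i : ℝ), (0 : ℝ))) '' Icc (-n : ℤ) n + K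
  have hrow : IsPreconnected row := isPreconnected_image_add hK.isPreconnected ordConnected_Icc
    fun i _ _ => by simpa using hhorizontal
  have hleft : ∃ p ∈ row, p.1 < 0 - (‖c‖ + D) := by
    refine ⟨_, add_mem_add (mem_image_of_mem _ (left_mem_Icc.2 (by lia))) hk₀, ?_⟩
    simp only [Int.cast_neg, Int.cast_natCast, Prod.fst_add]
    linarith [abs_le.1 (hcoord k₀ hk₀).1, norm_nonneg c]
  have hright : ∃ p ∈ row, 0 + (‖c‖ + D) < p.1 := by
    refine ⟨_, add_mem_add (mem_image_of_mem _ (right_mem_Icc.2 (by lia))) hk₀, ?_⟩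
    simp only [Int.cast_natCast, Prod.fst_add]
    linarith [abs_le.1 (hcoord k₀ hk₀).1, norm_nonneg c]
  have hheight : ∀ p ∈ row, |p.2| < n - (‖c‖ + D) := by
    rintro _ ⟨_, ⟨i, -, rfl⟩, k, hk, rfl⟩
    simp only [Prod.snd_add, zero_add]
    linarith [(hcoord k hk).2, norm_nonneg c]
  obtain ⟨_, ⟨_, ⟨i, -, rfl⟩, k, hk, rfl⟩, _, ⟨j, -, rfl⟩, k', hk', h⟩ :=
    inter_verticalChain_nonempty (z := fun j => c + (0, (j : ℝ))) hrow hK hKc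
      (fun j _ _ => by simpa using hvertical)
      (fun j _ k hk => by
        rw [add_right_comm, add_sub_cancel_right]
        exact norm_add_le_of_le le_rfl (hD k hk)) hleft hright hheight
  refine ⟨latticePoint (i, -j), mem_range_self _, k - k', sub_mem_sub hk hk', ?_⟩
  have hij : latticePoint (i, -j) = ((i : ℝ), (0 : ℝ)) - ((0 : ℝ), (j : ℝ)) := by
    simp [latticePoint]
  linear_combination hij - h

theorem exists_isPreconnected_reaching_level {X : Type*} [TopologicalSpace X] {x y : X}
    (γ : Path x y) {N : X → ℝ} (hN : Continuous N) {R : ℝ} (hx : N x ≤ R) (hy : R ≤ N y) :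
    ∃ A ⊆ range γ, IsPreconnected A ∧ x ∈ A ∧ (∀ a ∈ A, N a ≤ R) ∧ ∃ a ∈ A, N a = R := by
  have hNγ : Continuous (N ∘ γ) := hN.comp γ.continuous
  obtain ⟨T, hT, hTleast⟩ := (isClosed_singleton.preimage hNγ).isCompact.exists_isLeast
    (mem_range_of_exists_le_of_exists_ge hNγ ⟨0, by simpa⟩ ⟨1, by simpa⟩ :
      ((N ∘ γ) ⁻¹' {R}).Nonempty)
  refine ⟨γ '' Iic T, image_subset_range _ _,
    ordConnected_Iic.isPreconnected.image _ γ.continuous.continuousOn,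
    ⟨0, unitInterval.nonneg', γ.source⟩, ?_, γ T, mem_image_of_mem _ self_mem_Iic, hT⟩
  rintro _ ⟨t, ht, rfl⟩
  by_contra! hRt
  obtain ⟨s, hs, hsR⟩ := intermediate_value_Icc unitInterval.nonneg' hNγ.continuousOn
    (show R ∈ Icc ((N ∘ γ) 0) ((N ∘ γ) t) from ⟨by simpa, hRt.le⟩)
  have hTt : T = t := le_antisymm ((hTleast hsR).trans hs.2) ht
  exact hRt.ne' (hTt ▸ hT)

theorem exists_int_abs_eq_straddled {T : Set ℝ} {t C : ℝ} {h : ℕ} (h0 : 0 ∈ T) (ht : t ∈ T)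
    (hC : C < h) (hht : h + C < |t|) :
    ∃ x : ℤ, |x| = h ∧ (∃ t ∈ T, t < x - C) ∧ ∃ t ∈ T, x + C < t := by
  rcases le_total 0 t with h0t | h0t
  · rw [abs_of_nonneg h0t] at hht
    exact ⟨h, by simp, ⟨0, h0, by simpa using hC⟩, t, ht, hht⟩
  · rw [abs_of_nonpos h0t] at hht
    refine ⟨-h, by simp, ⟨t, ht, ?_⟩, 0, h0, ?_⟩ <;> push_cast <;> linarith

/-- The lattice points whose sup norm lies between `h` and `n`: a ring of lattice points around
the origin, containing long columns and rows of lattice points on each of its four sides. -/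
def squareAnnulus (h n : ℕ) : Set (ℤ × ℤ) := {p | h ≤ max |p.1| |p.2| ∧ max |p.1| |p.2| ≤ n}

theorem finite_squareAnnulus (h n : ℕ) : (squareAnnulus h n).Finite :=
  ((finite_Icc (-n : ℤ) n).prod (finite_Icc (-n : ℤ) n)).subset fun _ hp =>
    ⟨abs_le.1 (max_le_iff.1 hp.2).1, abs_le.1 (max_le_iff.1 hp.2).2⟩

theorem zero_notMem_latticePoint_image_add {K : Set (ℝ × ℝ)} {D : ℝ} {h n : ℕ}
    (hD : ∀ k ∈ K, ‖k‖ ≤ D) (hh : D < h) : 0 ∉ latticePoint '' squareAnnulus h n + K := by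
  rintro ⟨_, ⟨p, hp, rfl⟩, k, hk, hpk⟩
  have hle : (h : ℝ) ≤ ‖latticePoint p‖ := by
    have : (h : ℝ) ≤ max |(p.1 : ℝ)| |(p.2 : ℝ)| := by exact_mod_cast hp.1
    exact this
  rw [eq_neg_of_add_eq_zero_left hpk, norm_neg] at hle
  linarith [hD k hk]

section

variable {K : Set (ℝ × ℝ)} {r D : ℝ} {h n : ℕ} {z : ℤ × ℤ → ℝ × ℝ}

theorem inter_squareAnnulus_translates_nonempty {A : Set (ℝ × ℝ)} (hA : IsPreconnected A)
    (hK : IsConnected K) (hKc : IsCompact K)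
    (hz : ∀ p ∈ squareAnnulus h n, z p ∈ ball (latticePoint p) r)
    (hhorizontal : ball (1, 0) (2 * r) ⊆ K - K) (hvertical : ball (0, 1) (2 * r) ⊆ K - K)
    (hD : ∀ k ∈ K, ‖k‖ ≤ D) (hh : r + D < h) (hle : h ≤ n) (h0A : 0 ∈ A)
    (hAlt : ∀ a ∈ A, ‖a‖ < n - (r + D)) (hAgt : ∃ a ∈ A, h + (r + D) < ‖a‖) :
    (A ∩ (z '' squareAnnulus h n + K)).Nonempty := by
  obtain ⟨a, ha, ha_gt⟩ := hAgt
  have hle : (h : ℤ) ≤ n := by exact_mod_cast hle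
  have hbound : ∀ p ∈ squareAnnulus h n, ∀ k ∈ K, ‖z p + k - latticePoint p‖ ≤ r + D :=
    fun p hp k hk => by
      rw [add_sub_right_comm]
      exact norm_add_le_of_le (mem_ball_iff_norm.1 (hz p hp)).le (hD k hk)
  have hstep : ∀ p ∈ squareAnnulus h n, ∀ p' ∈ squareAnnulus h n,
      z p' - z p ∈ ball (latticePoint p' - latticePoint p) (2 * r) := fun p hp p' hp' =>
    (dist_sub_sub_le _ _ _ _).trans_lt (by linarith [mem_ball.1 (hz p hp), mem_ball.1 (hz p' hp')])
  have hcoord : ∀ a ∈ A, |a.1| < n - (r + D) ∧ |a.2| < n - (r + D) := fun a ha =>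
    max_lt_iff.1 (hAlt a ha)
  have hmono : ∀ S ⊆ squareAnnulus h n, A ∩ (z '' S + K) ⊆ A ∩ (z '' squareAnnulus h n + K) :=
    fun S hS => inter_subset_inter_right A (add_subset_add_right (image_mono hS))
  rcases lt_max_iff.1 ha_gt with ha₁ | ha₂
  · obtain ⟨x, hx, hleft, hright⟩ := exists_int_abs_eq_straddled
      (mem_image_of_mem Prod.fst h0A) (mem_image_of_mem _ ha) hh ha₁
    have hcolumn : ∀ i ∈ Icc (-n : ℤ) n, (x, i) ∈ squareAnnulus h n := fun i hi =>
      ⟨by simp [hx], max_le_iff.2 ⟨hx.trans_le hle, abs_le.2 hi⟩⟩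
    refine .mono (hmono ((x, ·) '' Icc (-n : ℤ) n) (image_subset_iff.2 hcolumn)) ?_
    rw [image_image]
    exact inter_verticalChain_nonempty hA hK hKc
      (fun i hi hi' => hvertical (by
        simpa [latticePoint] using hstep _ (hcolumn i hi) _ (hcolumn _ hi')))
      (fun i hi => hbound _ (hcolumn i hi)) (exists_mem_image.1 hleft)
      (exists_mem_image.1 hright) fun a ha => (hcoord a ha).2
  · obtain ⟨y, hy, hbelow, habove⟩ := exists_int_abs_eq_straddled
      (mem_image_of_mem Prod.snd h0A) (mem_image_of_mem _ ha) hh ha₂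
    have hrow : ∀ i ∈ Icc (-n : ℤ) n, (i, y) ∈ squareAnnulus h n := fun i hi =>
      ⟨by simp [hy], max_le_iff.2 ⟨abs_le.2 hi, hy.trans_le hle⟩⟩
    refine .mono (hmono ((·, y) '' Icc (-n : ℤ) n) (image_subset_iff.2 hrow)) ?_
    rw [image_image]
    exact inter_horizontalChain_nonempty hA hK hKc
      (fun i hi hi' => hhorizontal (by
        simpa [latticePoint] using hstep _ (hrow i hi) _ (hrow _ hi')))
      (fun i hi => hbound _ (hrow i hi)) (exists_mem_image.1 hbelow)
      (exists_mem_image.1 habove) fun a ha => (hcoord a ha).1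

theorem not_joinedIn_compl_squareAnnulus_translates (hK : IsConnected K) (hKc : IsCompact K)
    (hr : 0 ≤ r) (hz : ∀ p ∈ squareAnnulus h n, z p ∈ ball (latticePoint p) r)
    (hhorizontal : ball (1, 0) (2 * r) ⊆ K - K) (hvertical : ball (0, 1) (2 * r) ⊆ K - K)
    (hD : ∀ k ∈ K, ‖k‖ ≤ D) (hh : r + D < h) (hn : h + 2 * (r + D) < n) {q : ℝ × ℝ}
    (hq : n ≤ ‖q‖) : ¬ JoinedIn (z '' squareAnnulus h n + K)ᶜ 0 q := by
  rintro ⟨γ, hγ⟩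
  have hD₀ : 0 ≤ D := (norm_nonneg _).trans (hD _ hK.nonempty.some_mem)
  have hle : h ≤ n := by exact_mod_cast (by linarith : (h : ℝ) ≤ n)
  obtain ⟨A, hAγ, hA, h0A, hAle, a, ha, haR⟩ :=
    exists_isPreconnected_reaching_level γ continuous_norm (R := (h + n) / 2)
      (by rw [norm_zero]; positivity) (by linarith)
  obtain ⟨w, hwA, hw⟩ := inter_squareAnnulus_translates_nonempty hA hK hKc hz hhorizontal
    hvertical hD hh hle h0A (fun a ha => (hAle a ha).trans_lt (by linarith))
    ⟨a, ha, by linarith⟩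
  obtain ⟨t, rfl⟩ := hAγ hwA
  exact hγ t hw

end

theorem subset_compl_image_add_iff {V ι : Type*} [AddGroup V] {A K : Set V} {S : Set ι}
    {z : ι → V} : A ⊆ (z '' S + K)ᶜ ↔ z ∈ S.pi fun _ => (A - K)ᶜ := by
  constructor
  · rintro hA p hp ⟨a, ha, k, hk, hz⟩
    exact hA ha ⟨z p, mem_image_of_mem z hp, k, hk, by simp [← hz]⟩
  · rintro hz _ ha ⟨_, ⟨p, hp, rfl⟩, k, hk, rfl⟩
    exact hz p hp ⟨_, ha, k, hk, add_sub_cancel_right _ _⟩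

theorem exists_mem_joinedIn_compl_translates {V ι : Type*} [AddCommGroup V] [TopologicalSpace V]
    [IsTopologicalAddGroup V] [T2Space V] [LocallyPathConnectedSpace V] {E K : Set V}
    (hE : IsPreconnected E) (hK : IsCompact K) (hdense : Dense (E - K)ᶜ) {e v : V} (he : e ∈ E)
    (hev : e + v ∈ E) {S : Set ι} (hS : S.Finite) {U : Set (ι → V)} (hU : IsOpen U)
    {z₀ : ι → V} (hz₀ : z₀ ∈ U) (he₀ : e ∉ z₀ '' S + K) (N : ℕ) :
    ∃ z ∈ U, JoinedIn (z '' S + K)ᶜ e (e + N • v) := by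
  induction N with
  | zero => exact ⟨z₀, hz₀, by simpa using JoinedIn.refl he₀⟩
  | succ N ih =>
    obtain ⟨z, hzU, γ, hγ⟩ := ih
    -- Clearing the path found so far is an open condition on the centres, clearing the next
    -- translate of `E` a dense one.
    have hopen : IsOpen (S.pi fun _ => (range γ - K)ᶜ) := by
      refine isOpen_set_pi hS fun _ _ => ?_
      rw [sub_eq_add_neg]
      exact ((isCompact_range γ.continuous).add hK.neg).isClosed.isOpen_compl
    have hdense_translate : Dense (S.pi fun _ => ((N • v +ᵥ E) - K)ᶜ) := by
      refine dense_pi S fun _ _ => ?_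
      rw [sub_eq_add_neg, vadd_add_assoc, ← sub_eq_add_neg, ← vadd_set_compl]
      exact hdense.vadd _
    obtain ⟨z', ⟨hz'U, hz'γ⟩, hz'E⟩ := hdense_translate.inter_open_nonempty _ (hU.inter hopen)
      ⟨z, hzU, subset_compl_image_add_iff.1 (range_subset_iff.2 hγ)⟩
    refine ⟨z', hz'U, JoinedIn.trans
      ⟨γ, range_subset_iff.1 (subset_compl_image_add_iff.2 hz'γ)⟩ ?_⟩
    refine joinedIn_of_isPreconnected ((hS.image z').isCompact.add hK).isClosed.isOpen_compl
      (hE.image _ (continuous_const_vadd _).continuousOn) (subset_compl_image_add_iff.2 hz'E)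
      ⟨e, he, add_comm _ _⟩ ⟨e + v, hev, ?_⟩
    simp only [vadd_eq_add, succ_nsmul]
    abel

theorem interior_sub_nonempty_of_unit_vectors {E K : Set (ℝ × ℝ)} (hE : IsPreconnected E)
    (h0 : 0 ∈ E) {v : ℝ × ℝ} (hv : v ∈ E) (hv0 : v ≠ 0) (hK : IsConnected K) (hKc : IsCompact K)
    (hhorizontal : (1, 0) ∈ interior (K - K)) (hvertical : (0, 1) ∈ interior (K - K)) :
    (interior (E - K)).Nonempty := by
  by_contra hint
  have hdense : Dense (E - K)ᶜ :=
    interior_eq_empty_iff_dense_compl.1 (not_nonempty_iff_eq_empty.1 hint)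
  obtain ⟨r₁, hr₁, hball₁⟩ := Metric.mem_nhds_iff.1 (mem_interior_iff_mem_nhds.1 hhorizontal)
  obtain ⟨r₂, hr₂, hball₂⟩ := Metric.mem_nhds_iff.1 (mem_interior_iff_mem_nhds.1 hvertical)
  let r := min r₁ r₂ / 2
  have hr : 0 < r := half_pos (lt_min hr₁ hr₂)
  have hr_le : 2 * r ≤ r₁ ∧ 2 * r ≤ r₂ := le_min_iff.1 (mul_div_cancel₀ _ two_ne_zero).le
  obtain ⟨D, hD⟩ := hKc.isBounded.exists_norm_le
  obtain ⟨h, hh⟩ := exists_nat_gt (r + D)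
  obtain ⟨n, hn⟩ := exists_nat_gt (h + 2 * (r + D))
  obtain ⟨N, hN⟩ := exists_nat_ge (n / ‖v‖)
  have hS := finite_squareAnnulus h n
  obtain ⟨z, hz, hjoin⟩ := exists_mem_joinedIn_compl_translates hE hKc hdense h0
    (by rwa [zero_add]) hS (isOpen_set_pi hS fun p _ => isOpen_ball)
    (fun p _ => mem_ball_self hr : latticePoint ∈ _)
    (zero_notMem_latticePoint_image_add hD (by linarith)) N
  refine not_joinedIn_compl_squareAnnulus_translates hK hKc hr.le hz
    ((ball_subset_ball hr_le.1).trans hball₁) ((ball_subset_ball hr_le.2).trans hball₂)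
    hD hh hn ?_ hjoin
  rwa [zero_add, RCLike.norm_nsmul ℝ, nsmul_eq_mul, ← div_le_iff₀ (norm_pos_iff.2 hv0)]

theorem exists_continuousLinearEquiv_prod {V : Type*} [AddCommGroup V] [TopologicalSpace V]
    [IsTopologicalAddGroup V] [T2Space V] [Module ℝ V] [ContinuousSMul ℝ V]
    (hV : Module.finrank ℝ V = 2) {s : Set V} (hs : Submodule.span ℝ s = ⊤) :
    ∃ L : V ≃L[ℝ] ℝ × ℝ, (1, 0) ∈ L '' s ∧ (0, 1) ∈ L '' s := by
  have : FiniteDimensional ℝ V := Module.finite_of_finrank_eq_succ hV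
  have hbasis := Submodule.exists_fun_fin_finrank_span_eq ℝ s
  rw [hs, finrank_top, hV] at hbasis
  obtain ⟨f, hfs, hfspan, hf⟩ := hbasis
  let b := Module.Basis.mk hf hfspan.ge
  refine ⟨b.equivFunL.trans (.finTwoArrow ℝ ℝ), ⟨f 0, hfs 0, ?_⟩, f 1, hfs 1, ?_⟩
  · have : b 0 = f 0 := by simp [b]
    simp [← this]
  · have : b 1 = f 1 := by simp [b]
    simp [← this]

theorem exists_eq_segment_of_collinear {V : Type*} [NormedAddCommGroup V] [NormedSpace ℝ V]
    {F : Set V} (hF : IsConnected F) (hFc : IsCompact F) (hcol : Collinear ℝ F) :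
    ∃ a b, F = segment ℝ a b := by
  obtain ⟨a, ha⟩ := hF.nonempty
  obtain ⟨v, hv⟩ := (collinear_iff_of_mem ha).1 hcol
  rcases eq_or_ne v 0 with rfl | hv0
  · refine ⟨a, a, ?_⟩
    rw [segment_same]
    exact eq_singleton_iff_unique_mem.2 ⟨ha, fun p hp => by simpa using hv p hp⟩
  obtain ⟨φ, hφ⟩ := SeparatingDual.exists_eq_one (R := ℝ) hv0
  have hline : ∀ p ∈ F, AffineMap.lineMap a (a + v) (φ (p - a)) = p := by
    intro p hp
    obtain ⟨t, rfl⟩ := hv p hp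
    simp [hφ, AffineMap.lineMap_apply, add_comm]
  have hcont : Continuous fun p => φ (p - a) := by fun_prop
  have hIcc := eq_Icc_of_connected_compact (hF.image _ hcont.continuousOn) (hFc.image hcont)
  have hne := hIcc ▸ hF.nonempty.image fun p => φ (p - a)
  have himage : F = AffineMap.lineMap a (a + v) '' ((fun p => φ (p - a)) '' F) := by
    rw [image_image, image_congr hline, image_id']
  rw [hIcc, ← segment_eq_Icc (nonempty_Icc.1 hne), image_segment] at himage
  exact ⟨_, _, himage⟩

theorem vectorSpan_eq_top_of_not_collinear {V : Type*} [AddCommGroup V] [Module ℝ V]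
    (hV : Module.finrank ℝ V = 2) {F : Set V} (hF : ¬ Collinear ℝ F) : vectorSpan ℝ F = ⊤ := by
  have : FiniteDimensional ℝ V := Module.finite_of_finrank_eq_succ hV
  rw [collinear_iff_finrank_le_one] at hF
  exact Submodule.eq_top_of_finrank_eq (le_antisymm (Submodule.finrank_le _) (by lia))

section

variable {V : Type*} [NormedAddCommGroup V] [NormedSpace ℝ V]

theorem interior_sub_self_nonempty_of_vectorSpan_eq_top (hV : Module.finrank ℝ V = 2)
    {K : Set V} (hK : IsConnected K) (hKc : IsCompact K) (hspan : vectorSpan ℝ K = ⊤) :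
    (interior (K - K)).Nonempty := by
  obtain ⟨L, hhorizontal, hvertical⟩ := exists_continuousLinearEquiv_prod hV (s := K - K) hspan
  rw [image_sub] at hhorizontal hvertical
  have h := interior_sub_self_nonempty_of_unit_vectors (hK.image L L.continuous.continuousOn)
    (hKc.image L.continuous) hhorizontal hvertical
  rwa [← image_sub, ← L.coe_toHomeomorph, ← L.toHomeomorph.image_interior, image_nonempty] at h

theorem interior_sub_nonempty (hV : Module.finrank ℝ V = 2) {E K : Set V}
    (hE : IsPreconnected E) (hE' : E.Nontrivial) (hK : IsConnected K)
    (hKc : IsCompact K) (hKint : (interior (K - K)).Nonempty) : (interior (E - K)).Nonempty := by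
  obtain ⟨e, he, e', he', hne⟩ := hE'
  obtain ⟨L, hhorizontal, hvertical⟩ := exists_continuousLinearEquiv_prod hV (s := interior (K - K))
    (Submodule.eq_top_of_nonempty_interior' _
      (hKint.mono (interior_maximal Submodule.subset_span isOpen_interior)))
  have himage : ∀ s : Set V, interior (L '' s) = L '' interior s :=
    fun s => (L.toHomeomorph.image_interior s).symm
  rw [← himage, image_sub] at hhorizontal hvertical
  have h := interior_sub_nonempty_of_unit_vectors (E := L '' (-e +ᵥ E)) (v := L (-e +ᵥ e'))
    ((hE.image _ (continuous_const_vadd _).continuousOn).image L L.continuous.continuousOn)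
    ⟨-e +ᵥ e, vadd_mem_vadd_set he, by simp⟩ (mem_image_of_mem L (vadd_mem_vadd_set he'))
    (by simpa [neg_add_eq_zero] using hne) (hK.image L L.continuous.continuousOn)
    (hKc.image L.continuous) hhorizontal hvertical
  rwa [← image_sub, himage, image_nonempty, sub_eq_add_neg, vadd_add_assoc, interior_vadd,
    vadd_set_nonempty, ← sub_eq_add_neg] at h

theorem sum_connected_compact_not_segment_nonempty_interior_general
    (hV : Module.finrank ℝ V = 2) {E F : Set V} (hE : IsPreconnected E) (hE' : E.Nontrivial)
    (hF : IsConnected F) (hFc : IsCompact F) (hFseg : ¬ ∃ a b : V, F = segment ℝ a b) :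
    (interior (E + F)).Nonempty := by
  have hspan : vectorSpan ℝ F = ⊤ := vectorSpan_eq_top_of_not_collinear hV fun hcol =>
    hFseg (exists_eq_segment_of_collinear hF hFc hcol)
  have hFint : (interior (-F - -F)).Nonempty := by
    rw [neg_sub_neg]
    exact interior_sub_self_nonempty_of_vectorSpan_eq_top hV hF hFc hspan
  have hnegF : IsConnected (-F) := by
    rw [← image_neg_eq_neg]
    exact hF.image _ continuous_neg.continuousOn
  simpa only [sub_neg_eq_add] using interior_sub_nonempty hV hE hE' hnegF hFc.neg hFint

end

/-- Let `E, F ⊂ ℝ²` be connected sets each with cardinality greater than 1. If `F` is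
compact and not a line segment, then the arithmetic sum `E + F` has non-empty interior. -/
theorem sum_connected_compact_not_segment_nonempty_interior
    (E F : Set (EuclideanSpace ℝ (Fin 2)))
    (hEconn : IsConnected E) (hEcard : E.Nontrivial)
    (hFconn : IsConnected F) (hFcard : F.Nontrivial)
    (hFcpt : IsCompact F)
    (hFseg : ¬ ∃ a b : EuclideanSpace ℝ (Fin 2), F = segment ℝ a b) :
    (interior (E + F)).Nonempty :=
  sum_connected_compact_not_segment_nonempty_interior_general finrank_euclideanSpace_fin
    hEconn.isPreconnected hEcard hFconn hFcpt hFseg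
end

section
/- Let $E \subset \mathbb{R}^d$ be a connected set with cardinality greater than $1$, and let $F \subset \mathbb{R}^d$ be compact. Suppose there exists a compact set $K \subset \mathbb{R}^d$ such that: (i) $K$ is contained in a hyperplane (an affine subspace of $\mathbb{R}^d$ of codimension $1$), and (ii) the complement $(F \cup K)^c = \mathbb{R}^d \setminus (F \cup K)$ has at least one bounded connected component. Then the arithmetic sum $E + F = \{x + y : x \in E, y \in F\}$ has non-empty interior. -/
open Pointwise

/-!
Suppose `(E + F)ᶜ` is dense and cut the bounded component by the hyperplane `{φ = c}`. One side is a
nonempty bounded open set `P`, say above the hyperplane, whose frontier lies in `F` except for its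
base, which lies in `{φ = c}`. For `z ∉ E + F` the connected set `z - E` misses `F`, and `z` can be
chosen so that `z - E` has a point near the top of `P` and another one off the closure of `P`. Hence
`z - E` has to leave `P` through the base.

This exit is blocked by finitely many translates `w + P` covering the base, where `w` is taken from
the dense set of vectors with `z - w ∉ E + F`, so that `z - E` misses `w + F` as well. Each of them
brings a point of the upper half of `P` to the base, so it moves `P` down by more than half its
height: the translates miss the point of `z - E` near the top of `P`, and their own bases lie
below `P`.
-/

open Set

section Topology

variable {X : Type*} [TopologicalSpace X]

theorem subset_sdiff_closure_of_isPreconnected {S P Q : Set X} (hS : IsPreconnected S)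
    (hP : IsOpen P) (hQ : IsOpen Q) (hSPQ : (S ∩ (P \ closure Q)).Nonempty)
    (hfrP : S ∩ frontier P ⊆ Q) (hfrQ : Disjoint (S ∩ P) (frontier Q)) :
    S ⊆ P \ closure Q := by
  refine hS.subset_of_closure_inter_subset (hP.sdiff isClosed_closure) hSPQ ?_
  rintro y ⟨hy, hyS⟩
  have hyQ : y ∉ Q := by
    have hdisj : Disjoint (P \ closure Q) Q := disjoint_sdiff_left.mono_right subset_closure
    exact (hdisj.closure_left hQ).notMem_of_mem_left hy
  have hyP : y ∈ P := by
    by_contra hyP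
    exact hyQ (hfrP ⟨hyS, hP.frontier_eq ▸ ⟨closure_mono sdiff_subset hy, hyP⟩⟩)
  exact ⟨hyP, fun hyQ' ↦ hfrQ.notMem_of_mem_left ⟨hyS, hyP⟩ (hQ.frontier_eq ▸ ⟨hyQ', hyQ⟩)⟩

theorem disjoint_frontier_connectedComponentIn [LocallyConnectedSpace X] {W : Set X}
    (hW : IsOpen W) (x : X) : Disjoint (frontier (connectedComponentIn W x)) W := by
  refine disjoint_left.2 fun y hy hyW ↦ ?_
  rw [hW.connectedComponentIn.frontier_eq] at hy
  obtain ⟨q, hqy, hqx⟩ := mem_closure_iff.1 hy.1 _ (hW.connectedComponentIn (x := y))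
    (mem_connectedComponentIn hyW)
  apply hy.2
  rw [connectedComponentIn_eq hqx, ← connectedComponentIn_eq hqy]
  exact mem_connectedComponentIn hyW

end Topology

section TopologicalGroup

variable {G : Type*} [AddCommGroup G] [TopologicalSpace G] [IsTopologicalAddGroup G]

theorem frontier_add_subset_of_isCompact {T : Set G} (hT : IsCompact T) (P : Set G) :
    frontier (T + P) ⊆ T + frontier P := by
  rintro y ⟨hycl, hyint⟩
  have hclosed : IsClosed (T + closure P) := isClosed_closure.add_left_of_isCompact hT
  obtain ⟨t, ht, p, hp, rfl⟩ :=
    closure_minimal (add_subset_add_left subset_closure) hclosed hycl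
  exact add_mem_add ht ⟨hp, fun hpint ↦ hyint (subset_interior_add_right (add_mem_add ht hpint))⟩

theorem exists_finite_subset_add_of_dense {L D O : Set G} (hL : IsCompact L) (hD : Dense D)
    (hO : IsOpen O) (hOne : O.Nonempty) :
    ∃ T ⊆ D ∩ (L - O), T.Finite ∧ L ⊆ T + O := by
  have hcover : L ⊆ ⋃ w ∈ D ∩ (L - O), w +ᵥ O := by
    intro x hx
    obtain ⟨o, ho⟩ := hOne
    obtain ⟨w, hwO, hwD⟩ := hD.inter_open_nonempty {w | x - w ∈ O} (hO.preimage (by fun_prop))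
      ⟨x - o, by simpa using ho⟩
    exact mem_biUnion ⟨hwD, x, hx, x - w, hwO, sub_sub_self x w⟩ ⟨x - w, hwO, add_sub_cancel w x⟩
  obtain ⟨T, hT, hTfin, hLT⟩ := hL.elim_finite_subcover_image (fun w _ ↦ hO.vadd w) hcover
  exact ⟨T, hT, hTfin, by simpa only [iUnion_vadd_set, vadd_eq_add] using hLT⟩

end TopologicalGroup

theorem disjoint_singleton_sub_vadd_iff {G : Type*} [AddCommGroup G] {E F : Set G} {z w : G} :
    Disjoint ({z} - E) (w +ᵥ F) ↔ z - w ∉ E + F := by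
  rw [singleton_sub, iff_not_comm, not_disjoint_iff]
  constructor
  · rintro ⟨e, he, f, hf, hef⟩
    exact ⟨z - e, mem_image_of_mem _ he, f, hf, by grind [vadd_eq_add]⟩
  · rintro ⟨_, ⟨e, he, rfl⟩, f, hf, hef⟩
    exact ⟨e, he, f, hf, by grind [vadd_eq_add]⟩

theorem exists_mapsTo_Ioc_and_half_lt {α : Type*} {f : α → ℝ} {s : Set α} {c : ℝ}
    (hs : s.Nonempty) (hbdd : BddAbove (f '' s)) (hc : MapsTo f s (Ioi c)) :
    ∃ δ, MapsTo f s (Ioc c (c + 2 * δ)) ∧ ∃ x ∈ s, c + δ < f x := by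
  have hle : ∀ x ∈ s, f x ≤ sSup (f '' s) := fun x hx ↦ le_csSup hbdd (mem_image_of_mem f hx)
  have hlt : c < sSup (f '' s) := by
    obtain ⟨x, hx⟩ := hs
    exact (hc hx).trans_le (hle x hx)
  refine ⟨(sSup (f '' s) - c) / 2, fun x hx ↦ ⟨hc hx, by linarith [hle x hx]⟩, ?_⟩
  obtain ⟨_, ⟨x, hx, rfl⟩, hxlt⟩ := exists_lt_of_lt_csSup (hs.image f)
    (show c + (sSup (f '' s) - c) / 2 < sSup (f '' s) by linarith)
  exact ⟨x, hx, hxlt⟩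

section TopologicalVectorSpace

variable {V : Type*} [AddCommGroup V] [TopologicalSpace V] [IsTopologicalAddGroup V] [Module ℝ V]

theorem exists_finite_subset_add_of_apply_lt {L D P : Set V} {φ : StrongDual ℝ V} {c δ : ℝ}
    (hL : IsCompact L) (hLφ : L ⊆ {x | φ x = c}) (hD : Dense D) (hP : IsOpen P)
    (htop : (P ∩ {x | c + δ < φ x}).Nonempty) :
    ∃ T ⊆ D, T.Finite ∧ (∀ w ∈ T, φ w < -δ) ∧ L ⊆ T + P := by
  obtain ⟨T, hT, hTfin, hLT⟩ := exists_finite_subset_add_of_dense hL hD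
    (hP.inter (isOpen_lt continuous_const φ.continuous)) htop
  refine ⟨T, fun w hw ↦ (hT hw).1, hTfin, fun w hw ↦ ?_,
    hLT.trans (add_subset_add_left inter_subset_left)⟩
  obtain ⟨x, hx, o, ⟨-, ho⟩, rfl⟩ := (hT hw).2
  rw [map_sub]
  linarith [show φ x = c from hLφ hx, show c + δ < φ o from ho]

theorem subset_of_dense_disjoint_vadd {S F P : Set V} {φ : StrongDual ℝ V} {c δ : ℝ}
    (hS : IsPreconnected S) (hP : IsOpen P) (hPcpt : IsCompact (closure P))
    (hPφ : MapsTo φ P (Ioc c (c + 2 * δ))) (hfr : frontier P ⊆ F ∪ {x | φ x = c})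
    (hSF : Disjoint S F) (hdense : Dense {w : V | Disjoint S (w +ᵥ F)})
    (htop : (S ∩ (P ∩ {x | c + δ < φ x})).Nonempty) :
    S ⊆ P := by
  have hbase : IsCompact (closure P ∩ {x | φ x = c}) :=
    hPcpt.inter_right (isClosed_eq φ.continuous continuous_const)
  obtain ⟨T, hT, hTfin, hTφ, hcover⟩ :=
    exists_finite_subset_add_of_apply_lt hbase inter_subset_right hdense hP htop.right
  have hle : closure (T + P) ⊆ {x | φ x ≤ c + δ} := by
    refine closure_minimal ?_ (isClosed_le φ.continuous continuous_const)
    rintro _ ⟨w, hw, p, hp, rfl⟩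
    simp only [mem_ofPred_eq, map_add]
    linarith [hTφ w hw, (hPφ hp).2]
  have hstart : (S ∩ (P \ closure (T + P))).Nonempty := by
    obtain ⟨p, hpS, hpP, hp⟩ := htop
    exact ⟨p, hpS, hpP, fun hpT ↦ (show φ p ≤ c + δ from hle hpT).not_gt hp⟩
  have hexit : S ∩ frontier P ⊆ T + P := by
    rintro y ⟨hyS, hy⟩
    have hyφ := (hfr hy).resolve_left (hSF.notMem_of_mem_left hyS)
    exact hcover ⟨frontier_subset_closure hy, hyφ⟩
  have hblock : Disjoint (S ∩ P) (frontier (T + P)) := by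
    refine disjoint_left.2 ?_
    rintro y ⟨hyS, hyP⟩ hy
    obtain ⟨w, hw, f, hf, rfl⟩ := frontier_add_subset_of_isCompact hTfin.isCompact P hy
    rcases hfr hf with hfF | hfφ
    · exact (hT hw).notMem_of_mem_left hyS (vadd_mem_vadd_set hfF)
    · have hδ : 0 < δ := by
        obtain ⟨p, -, hpP, hp⟩ := htop
        linarith [show c + δ < φ p from hp, (hPφ hpP).2]
      have hyφ := (hPφ hyP).1
      rw [map_add, show φ f = c from hfφ] at hyφ
      linarith [hTφ w hw]
  exact (subset_sdiff_closure_of_isPreconnected hS hP hP.add_left hstart hexit hblock).trans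
    sdiff_subset

theorem singleton_sub_subset_of_dense_compl_add {E F P : Set V} {φ : StrongDual ℝ V} {c δ : ℝ}
    {z : V} (hE : IsPreconnected E) (hP : IsOpen P) (hPcpt : IsCompact (closure P))
    (hPφ : MapsTo φ P (Ioc c (c + 2 * δ))) (hfr : frontier P ⊆ F ∪ {x | φ x = c})
    (hdense : Dense (E + F)ᶜ) (hz : z ∉ E + F)
    (htop : (({z} - E) ∩ (P ∩ {x | c + δ < φ x})).Nonempty) :
    {z} - E ⊆ P := by
  have hconn : IsPreconnected ({z} - E) := by
    rw [singleton_sub]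
    exact hE.image _ (by fun_prop)
  have hdisj : Disjoint ({z} - E) F := by
    rwa [← zero_vadd V F, disjoint_singleton_sub_vadd_iff, sub_zero]
  have hdense' : Dense {w : V | Disjoint ({z} - E) (w +ᵥ F)} := by
    simp_rw [disjoint_singleton_sub_vadd_iff]
    exact hdense.preimage (Homeomorph.subLeft z).isOpenMap
  exact subset_of_dense_disjoint_vadd hconn hP hPcpt hPφ hfr hdisj hdense' htop

end TopologicalVectorSpace

section NormedSpace

variable {V : Type*} [NormedAddCommGroup V] [NormedSpace ℝ V]

theorem exists_mem_add_notMem_closure {O : Set V} (hO : Bornology.IsBounded O)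
    (hne : O.Nonempty) {v : V} (hv : v ≠ 0) : ∃ u ∈ O, u + v ∉ closure O := by
  by_contra! h
  have hmaps : MapsTo (· + v) (closure O) (closure O) := by
    simpa only [closure_closure] using MapsTo.closure h (continuous_add_const v)
  obtain ⟨u, hu⟩ := hne
  have hmem (n : ℕ) : u + n • v ∈ closure O := by
    simpa using hmaps.iterate n (subset_closure hu)
  obtain ⟨R, hR⟩ := hO.closure.exists_norm_le
  obtain ⟨n, hn⟩ := exists_nat_gt ((R + ‖u‖) / ‖v‖)
  have hnv : n * ‖v‖ ≤ R + ‖u‖ := by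
    calc n * ‖v‖
      _ = ‖(u + n • v) - u‖ := by rw [add_sub_cancel_left, RCLike.norm_nsmul ℝ, nsmul_eq_mul]
      _ ≤ ‖u + n • v‖ + ‖u‖ := norm_sub_le _ _
      _ ≤ R + ‖u‖ := by gcongr; exact hR _ (hmem n)
  exact hnv.not_gt ((div_lt_iff₀ (norm_pos_iff.2 hv)).1 hn)

theorem exists_add_notMem_closure_of_apply_nonneg {P : Set V} (hP : Bornology.IsBounded P)
    {φ : StrongDual ℝ V} {m : ℝ} (hne : (P ∩ {x | m < φ x}).Nonempty) {v : V} (hv : v ≠ 0)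
    (hφv : 0 ≤ φ v) : ∃ u ∈ P ∩ {x | m < φ x}, u + v ∉ closure P := by
  obtain ⟨u, hu, huv⟩ := exists_mem_add_notMem_closure (hP.subset inter_subset_left) hne hv
  refine ⟨u, hu, fun huP ↦ huv ?_⟩
  have hφuv : m < φ (u + v) := by
    rw [map_add]
    exact lt_add_of_lt_of_nonneg hu.2 hφv
  exact (isOpen_lt continuous_const φ.continuous).closure_inter ⟨huP, hφuv⟩

variable [FiniteDimensional ℝ V]

theorem interior_add_nonempty_of_frontier_subset_of_lt {E F P : Set V} {φ : StrongDual ℝ V} {c : ℝ}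
    (hE : IsPreconnected E) (hEnt : E.Nontrivial) (hP : IsOpen P) (hPb : Bornology.IsBounded P)
    (hPne : P.Nonempty) (hc : MapsTo φ P (Ioi c)) (hfr : frontier P ⊆ F ∪ {x | φ x = c}) :
    (interior (E + F)).Nonempty := by
  by_contra hint
  have hdense : Dense (E + F)ᶜ := by
    rwa [not_nonempty_iff_eq_empty, interior_eq_empty_iff_dense_compl] at hint
  have := FiniteDimensional.proper_real V
  have hPcpt : IsCompact (closure P) := hPb.isCompact_closure
  have hbdd : BddAbove (φ '' P) :=
    (hPcpt.bddAbove_image φ.continuous.continuousOn).mono (image_mono subset_closure)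
  obtain ⟨δ, hPφ, htop⟩ := exists_mapsTo_Ioc_and_half_lt hPne hbdd hc
  have hO : IsOpen (P ∩ {x | c + δ < φ x}) := hP.inter (isOpen_lt continuous_const φ.continuous)
  obtain ⟨e₁, he₁, e₂, he₂, hne, hle⟩ : ∃ e₁ ∈ E, ∃ e₂ ∈ E, e₁ ≠ e₂ ∧ φ e₂ ≤ φ e₁ := by
    obtain ⟨a, ha, b, hb, hab⟩ := hEnt
    rcases le_total (φ a) (φ b) with h | h
    exacts [⟨b, hb, a, ha, hab.symm, h⟩, ⟨a, ha, b, hb, hab, h⟩]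
  obtain ⟨u, huO, hu⟩ := exists_add_notMem_closure_of_apply_nonneg hPb htop (sub_ne_zero.2 hne)
    (by rw [map_sub]; exact sub_nonneg.2 hle)
  obtain ⟨z, ⟨hz₁, hz₂⟩, hz⟩ := hdense.inter_open_nonempty
    {z | z - e₁ ∈ P ∩ {x | c + δ < φ x} ∧ z - e₂ ∈ (closure P)ᶜ}
    ((hO.preimage (by fun_prop)).inter (isClosed_closure.isOpen_compl.preimage (by fun_prop)))
    ⟨u + e₁, by simpa using huO, by rwa [mem_compl_iff, add_sub_assoc]⟩
  have hsub : {z} - E ⊆ P :=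
    singleton_sub_subset_of_dense_compl_add hE hP hPcpt hPφ hfr hdense hz
      ⟨z - e₁, sub_mem_sub rfl he₁, hz₁⟩
  exact hz₂ (subset_closure (hsub (sub_mem_sub rfl he₂)))

theorem interior_add_nonempty_of_frontier_subset {E F U : Set V} {φ : StrongDual ℝ V} {c : ℝ}
    (hE : IsPreconnected E) (hEnt : E.Nontrivial) (hU : IsOpen U) (hUb : Bornology.IsBounded U)
    (hUne : U.Nonempty) (hφ : φ ≠ 0) (hfr : frontier U ⊆ F ∪ {x | φ x = c}) :
    (interior (E + F)).Nonempty := by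
  obtain ⟨y, hyU, hyc⟩ : ∃ y ∈ U, φ y ≠ c :=
    ((dense_compl_singleton c).preimage (φ.isOpenMap_of_ne_zero hφ)).inter_open_nonempty U hU hUne
  wlog hlt : c < φ y generalizing φ c
  · refine this (φ := -φ) (c := -c) (neg_ne_zero.2 hφ) ?_ ?_ ?_
    · simpa using hfr
    · simpa using hyc
    · simpa using lt_of_le_of_ne (not_lt.1 hlt) hyc
  refine interior_add_nonempty_of_frontier_subset_of_lt hE hEnt
    (hU.inter (isOpen_lt continuous_const φ.continuous)) (hUb.subset inter_subset_left)
    ⟨y, hyU, hlt⟩ (fun _ hx ↦ hx.2) ((frontier_inter_subset _ _).trans (union_subset ?_ ?_))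
  · exact inter_subset_left.trans hfr
  · exact fun x hx ↦ Or.inr (frontier_lt_subset_eq continuous_const φ.continuous hx.2).symm

theorem sum_connected_compact_hyperplane_aux_nonempty_interior_general {E F K : Set V}
    (hE : IsPreconnected E) (hEnt : E.Nontrivial) (hFK : IsClosed (F ∪ K))
    (hK : ∃ (φ : V →ₗ[ℝ] ℝ) (c : ℝ), φ ≠ 0 ∧ ∀ x ∈ K, φ x = c)
    (hcomp : ∃ x ∈ (F ∪ K)ᶜ, Bornology.IsBounded (connectedComponentIn (F ∪ K)ᶜ x)) :
    (interior (E + F)).Nonempty := by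
  obtain ⟨φ, c, hφ, hKφ⟩ := hK
  obtain ⟨x, hx, hb⟩ := hcomp
  refine interior_add_nonempty_of_frontier_subset (φ := φ.toContinuousLinearMap) (c := c) hE hEnt
    hFK.isOpen_compl.connectedComponentIn hb ⟨x, mem_connectedComponentIn hx⟩ (by simpa using hφ) ?_
  calc frontier (connectedComponentIn (F ∪ K)ᶜ x)
      ⊆ F ∪ K := disjoint_compl_right_iff_subset.1
        (disjoint_frontier_connectedComponentIn hFK.isOpen_compl x)
    _ ⊆ F ∪ {y | φ y = c} := union_subset_union_right F hKφ

end NormedSpace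

/-- Let `E ⊂ ℝ^d` be a connected set with cardinality greater than 1, and `F ⊂ ℝ^d`
compact. Suppose there exists a compact set `K ⊂ ℝ^d` contained in a hyperplane such
that `(F ∪ K)ᶜ` has at least one bounded connected component. Then `E + F` has
non-empty interior. -/
theorem sum_connected_compact_hyperplane_aux_nonempty_interior
    (d : ℕ) (E F K : Set (EuclideanSpace ℝ (Fin d)))
    (hEconn : IsConnected E) (hEcard : E.Nontrivial)
    (hFcpt : IsCompact F) (hKcpt : IsCompact K)
    (hKplane : ∃ (φ : EuclideanSpace ℝ (Fin d) →ₗ[ℝ] ℝ) (c : ℝ),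
      φ ≠ 0 ∧ ∀ x ∈ K, φ x = c)
    (hcomp : ∃ x ∈ (F ∪ K)ᶜ, Bornology.IsBounded (connectedComponentIn (F ∪ K)ᶜ x)) :
    (interior (E + F)).Nonempty :=
  sum_connected_compact_hyperplane_aux_nonempty_interior_general hEconn.isPreconnected hEcard
    (hFcpt.union hKcpt).isClosed hKplane hcomp
end

section
/- Let $F$ be a compact connected subset of $\mathbb{R}^2$ with empty interior, and suppose that $F$ is not contained in any affine line in $\mathbb{R}^2$. Then there exists a compact set $K \subset \mathbb{R}^2$ contained in an affine line such that the complement $(F \cup K)^c = \mathbb{R}^2 \setminus (F \cup K)$ has at least one bounded connected component. -/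
/-!
A convex set with empty interior spans a proper affine subspace, so `F` is not convex: there are
`a, b ∈ F` and a point `c` of the segment `[a, b]` outside `F`. Take `K = [a, b]`.

Points near `c` on the two sides of `[a, b]` lie in different components of `(F ∪ K)ᶜ`. Otherwise
a path `γ` in `(F ∪ K)ᶜ` joins two such points `p` and `q`. As `F` is connected, `(z - a) / (z - b)`
has a continuous logarithm on every closed set missing `F`, in particular on the union of `γ` and a
small disc around `c`. With `w = (z - a) / (b - z)`, this logarithm differs by a constant from the
principal `log (-w)` along `γ` and from the principal `log w` on the disc, so `log (-w) - log w`
takes the same value at `p` and `q`; but it is `-πi` on one side of the segment and `πi` on the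
other. Only one component of the complement of a bounded set in the plane is unbounded, so the
component of `p` or that of `q` is bounded.
-/

section AffineHyperplane

variable {K V : Type*} [Field K] [AddCommGroup V] [Module K V]

lemma exists_linearMap_eq_const_of_vectorSpan_ne_top {s : Set V} (hs : vectorSpan K s ≠ ⊤) :
    ∃ (φ : V →ₗ[K] K) (c : K), φ ≠ 0 ∧ ∀ x ∈ s, φ x = c := by
  obtain ⟨φ, hφ, hle⟩ := Submodule.exists_le_ker_of_lt_top _ (lt_top_iff_ne_top.2 hs)
  obtain rfl | ⟨a, ha⟩ := s.eq_empty_or_nonempty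
  · exact ⟨φ, 0, hφ, by simp⟩
  · refine ⟨φ, φ a, hφ, fun x hx => ?_⟩
    have hker : φ (x - a) = 0 := hle (vsub_mem_vectorSpan K hx ha)
    rwa [map_sub, sub_eq_zero] at hker

lemma vectorSpan_segment_ne_top [LinearOrder K] [IsStrictOrderedRing K]
    (hV : 1 < Module.finrank K V) (a b : V) : vectorSpan K (segment K a b) ≠ ⊤ := by
  intro h
  have hrank : Module.finrank K (vectorSpan K (segment K a b)) ≤ 1 := by
    rw [← convexHull_pair, ← direction_affineSpan, affineSpan_convexHull, direction_affineSpan]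
    exact (collinear_pair K a b).finrank_le_one
  rw [h, finrank_top] at hrank
  exact hrank.not_gt hV

lemma vectorSpan_ne_top_of_convex_of_interior_eq_empty {E : Type*} [NormedAddCommGroup E]
    [NormedSpace ℝ E] [FiniteDimensional ℝ E] {s : Set E} (hs : Convex ℝ s) (hne : s.Nonempty)
    (hint : interior s = ∅) : vectorSpan ℝ s ≠ ⊤ := by
  rw [Ne, ← AffineSubspace.affineSpan_eq_top_iff_vectorSpan_eq_top_of_nonempty ℝ E E hne,
    ← hs.interior_nonempty_iff_affineSpan_eq_top, hint]
  exact Set.not_nonempty_empty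

end AffineHyperplane

section BoundedComponent

open Bornology Metric

variable {E : Type*} [NormedAddCommGroup E] [NormedSpace ℝ E]

lemma isPreconnected_compl_closedBall_zero (hE : 1 < Module.rank ℝ E) (r : ℝ) :
    IsPreconnected (closedBall (0 : E) r)ᶜ := by
  obtain hr | hr := lt_or_ge r 0
  · simpa [closedBall_eq_empty.2 hr] using isPreconnected_univ
  have hpolar : (closedBall (0 : E) r)ᶜ =
      (fun p : ℝ × E => p.1 • p.2) '' (Set.Ioi r ×ˢ sphere (0 : E) 1) := by
    ext x
    simp only [Set.mem_compl_iff, mem_closedBall_zero_iff, not_le, Set.mem_image, Set.mem_prod,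
      Set.mem_Ioi, mem_sphere_zero_iff_norm, Prod.exists]
    constructor
    · intro hx
      have hx0 : ‖x‖ ≠ 0 := (hr.trans_lt hx).ne'
      exact ⟨‖x‖, ‖x‖⁻¹ • x, ⟨hx, by simp [norm_smul, hx0]⟩, smul_inv_smul₀ hx0 x⟩
    · rintro ⟨t, y, ⟨ht, hy⟩, rfl⟩
      rw [norm_smul, hy, mul_one]
      exact ht.trans_le (le_abs_self t)
  rw [hpolar]
  exact (isPreconnected_Ioi.prod (isPreconnected_sphere hE 0 1)).image _ (by fun_prop)

lemma isBounded_connectedComponentIn_or (hE : 1 < Module.rank ℝ E) {U : Set E}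
    (hU : IsBounded Uᶜ) {x y : E} (hxy : connectedComponentIn U x ≠ connectedComponentIn U y) :
    IsBounded (connectedComponentIn U x) ∨ IsBounded (connectedComponentIn U y) := by
  by_contra! hunb
  obtain ⟨R, hR⟩ := hU.subset_closedBall 0
  have exists_far {z : E} (hz : ¬ IsBounded (connectedComponentIn U z)) :
      ∃ p ∈ connectedComponentIn U z, p ∉ closedBall 0 R :=
    Set.not_subset.1 fun h => hz (isBounded_closedBall.subset h)
  obtain ⟨p, hpx, hp⟩ := exists_far hunb.1
  obtain ⟨q, hqy, hq⟩ := exists_far hunb.2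
  have hqp : q ∈ connectedComponentIn U p :=
    (isPreconnected_compl_closedBall_zero hE R).subset_connectedComponentIn hp
      (Set.compl_subset_comm.1 hR) hq
  exact hxy (by rw [connectedComponentIn_eq hpx, connectedComponentIn_eq hqp,
    connectedComponentIn_eq hqy])

end BoundedComponent

section Logarithm

open Complex Set Topology

lemma sub_log_eq_sub_log_of_exp_eq_mul {X : Type*} [TopologicalSpace X] {S : Set X}
    (hS : IsPreconnected S) {g w : X → ℂ} (hg : ContinuousOn g S) (hw : ContinuousOn w S)
    (hslit : MapsTo w S slitPlane) {k : ℂ} (hexp : ∀ z ∈ S, exp (g z) = k * w z)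
    {x y : X} (hx : x ∈ S) (hy : y ∈ S) : g x - log (w x) = g y - log (w y) := by
  have hconst : ∀ z ∈ S, exp (g z - log (w z)) = k := fun z hz => by
    have hwz := slitPlane_ne_zero (hslit hz)
    rw [exp_sub, exp_log hwz, hexp z hz, mul_div_cancel_right₀ _ hwz]
  exact isCoveringMap_exp.constOn_of_comp hS (hg.sub (hw.clog hslit))
    (fun z hz z' hz' => Subtype.ext ((hconst z hz).trans (hconst z' hz').symm)) hx hy

lemma eventually_exists_continuousOn_exp_eq_div {X : Set ℂ} (hX : IsClosed X) {a : ℂ}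
    (ha : a ∉ X) : ∀ᶠ b in 𝓝 a,
      ∃ g : ℂ → ℂ, ContinuousOn g X ∧ ∀ z ∈ X, exp (g z) = (z - a) / (z - b) := by
  obtain ⟨ε, hε, hball⟩ := Metric.isOpen_iff.1 hX.isOpen_compl a ha
  filter_upwards [Metric.ball_mem_nhds a hε] with b hb
  have hne : ∀ z ∈ X, z - a ≠ 0 := fun z hz h => ha (sub_eq_zero.1 h ▸ hz)
  have hslit : ∀ z ∈ X, 1 + (a - b) / (z - a) ∈ slitPlane := fun z hz => by
    have hza : ε ≤ ‖z - a‖ := not_lt.1 fun h => hball (mem_ball_iff_norm.2 h) hz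
    refine mem_slitPlane_of_norm_lt_one ?_
    rw [norm_div, div_lt_one (norm_pos_iff.2 (hne z hz))]
    exact (mem_ball_iff_norm'.1 hb).trans_le hza
  refine ⟨fun z => -log (1 + (a - b) / (z - a)), ?_, fun z hz => ?_⟩
  · refine (ContinuousOn.clog ?_ hslit).neg
    exact continuousOn_const.add (continuousOn_const.div (by fun_prop) hne)
  · rw [exp_neg, exp_log (slitPlane_ne_zero (hslit z hz)), one_add_div (hne z hz), inv_div,
      sub_add_sub_cancel]

lemma exists_continuousOn_exp_eq_div {F X : Set ℂ} (hF : IsPreconnected F) (hX : IsClosed X)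
    (hFX : Disjoint F X) {a b : ℂ} (ha : a ∈ F) (hb : b ∈ F) :
    ∃ g : ℂ → ℂ, ContinuousOn g X ∧ ∀ z ∈ X, exp (g z) = (z - a) / (z - b) := by
  have hne {c z : ℂ} (hc : c ∈ F) (hz : z ∈ X) : z - c ≠ 0 :=
    sub_ne_zero.2 (hFX.ne_of_mem hc hz).symm
  refine hF.induction₂ (fun a b => ∃ g : ℂ → ℂ, ContinuousOn g X ∧
    ∀ z ∈ X, exp (g z) = (z - a) / (z - b)) (fun c hc => ?_) ?_ ?_ ha hb
  · exact mem_nhdsWithin_of_mem_nhds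
      (eventually_exists_continuousOn_exp_eq_div hX (hFX.notMem_of_mem_left hc))
  · rintro c d e - hd - ⟨g, hg, hgexp⟩ ⟨k, hk, hkexp⟩
    refine ⟨g + k, hg.add hk, fun z hz => ?_⟩
    rw [Pi.add_apply, exp_add, hgexp z hz, hkexp z hz, div_mul_div_cancel₀ (hne hd hz)]
  · rintro c d - - ⟨g, hg, hgexp⟩
    exact ⟨-g, hg.neg, fun z hz => by rw [Pi.neg_apply, exp_neg, hgexp z hz, inv_div]⟩

end Logarithm

section SegmentCoord

open Complex Set Topology

/-- The Möbius coordinate sending `a` to `0` and `b` to `∞`, so that the open segment from `a` to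
`b` corresponds to the positive real axis and the two sides of the line through `a` and `b`
correspond to the upper and lower half planes. The junk value at `z = b` is `0`. -/
noncomputable def segmentCoord (a b z : ℂ) : ℂ := (z - a) / (b - z)

variable {a b c : ℂ}

lemma neg_segmentCoord (a b z : ℂ) : -segmentCoord a b z = (z - a) / (z - b) := by
  rw [segmentCoord, ← div_neg, neg_sub]

open scoped ComplexOrder in
lemma neg_segmentCoord_mem_slitPlane_iff {z : ℂ} :
    -segmentCoord a b z ∈ slitPlane ↔ z ∉ segment ℝ a b := by
  rw [mem_segment_iff_sameRay, sameRay_iff_arg_div_eq_zero, ← segmentCoord, arg_eq_zero_iff_zero_le,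
    mem_slitPlane_iff_not_le_zero, neg_nonpos]

lemma segmentCoord_mem_slitPlane (hc : c ∈ segment ℝ a b) (hca : c ≠ a) (hcb : c ≠ b) :
    segmentCoord a b c ∈ slitPlane :=
  (mem_slitPlane_or_neg_mem_slitPlane
    (div_ne_zero (sub_ne_zero.2 hca) (sub_ne_zero.2 hcb.symm))).resolve_right
      fun h => neg_segmentCoord_mem_slitPlane_iff.1 h hc

lemma segmentCoord_im_eq_zero (hc : c ∈ segment ℝ a b) : (segmentCoord a b c).im = 0 := by
  by_contra h
  refine neg_segmentCoord_mem_slitPlane_iff.1 (mem_slitPlane_iff.2 (Or.inr ?_)) hc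
  simpa using h

lemma hasStrictDerivAt_segmentCoord (hcb : c ≠ b) :
    HasStrictDerivAt (segmentCoord a b) ((b - a) / (b - c) ^ 2) c := by
  have h := HasStrictDerivAt.fun_div ((hasStrictDerivAt_id c).sub_const a)
    ((hasStrictDerivAt_id c).const_sub b) (sub_ne_zero.2 hcb.symm)
  have hnum : b - a = 1 * (b - c) - (c - a) * -1 := by ring
  rwa [hnum]

lemma continuousAt_segmentCoord (hcb : c ≠ b) : ContinuousAt (segmentCoord a b) c :=
  (hasStrictDerivAt_segmentCoord hcb).hasDerivAt.continuousAt

lemma map_segmentCoord_nhds (hab : a ≠ b) (hcb : c ≠ b) :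
    Filter.map (segmentCoord a b) (𝓝 c) = 𝓝 (segmentCoord a b c) :=
  (hasStrictDerivAt_segmentCoord hcb).map_nhds_eq
    (div_ne_zero (sub_ne_zero.2 hab.symm) (pow_ne_zero 2 (sub_ne_zero.2 hcb.symm)))

lemma frequently_segmentCoord_im_pos (hab : a ≠ b) (hc : c ∈ segment ℝ a b) (hcb : c ≠ b) :
    ∃ᶠ z in 𝓝 c, 0 < (segmentCoord a b z).im := by
  rw [← Filter.frequently_map (P := fun w : ℂ => 0 < w.im), map_segmentCoord_nhds hab hcb]
  have hmem : segmentCoord a b c ∈ closure {w : ℂ | 0 < w.im} := by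
    rw [closure_setOfPred_lt_im]
    exact (segmentCoord_im_eq_zero hc).ge
  exact mem_closure_iff_frequently.1 hmem

lemma frequently_segmentCoord_im_neg (hab : a ≠ b) (hc : c ∈ segment ℝ a b) (hcb : c ≠ b) :
    ∃ᶠ z in 𝓝 c, (segmentCoord a b z).im < 0 := by
  rw [← Filter.frequently_map (P := fun w : ℂ => w.im < 0), map_segmentCoord_nhds hab hcb]
  have hmem : segmentCoord a b c ∈ closure {w : ℂ | w.im < 0} := by
    rw [closure_setOfPred_im_lt]
    exact (segmentCoord_im_eq_zero hc).le
  exact mem_closure_iff_frequently.1 hmem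

end SegmentCoord

section Separation

open Complex Set Topology Bornology Metric

lemma log_neg_segmentCoord_sub_log_segmentCoord_eq {F P S : Set ℂ} {a b p q : ℂ}
    (hF : IsPreconnected F) (ha : a ∈ F) (hb : b ∈ F)
    (hP : IsPreconnected P) (hPc : IsClosed P) (hFP : Disjoint F P)
    (hPab : Disjoint (segment ℝ a b) P)
    (hS : IsPreconnected S) (hSc : IsClosed S) (hFS : Disjoint F S)
    (hSab : MapsTo (segmentCoord a b) S slitPlane) (hp : p ∈ P ∩ S) (hq : q ∈ P ∩ S) :
    log (-segmentCoord a b p) - log (segmentCoord a b p) =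
      log (-segmentCoord a b q) - log (segmentCoord a b q) := by
  obtain ⟨g, hg, hgexp⟩ := exists_continuousOn_exp_eq_div hF (hPc.union hSc)
    (disjoint_union_right.2 ⟨hFP, hFS⟩) ha hb
  simp only [← neg_segmentCoord] at hgexp
  have hcont {T : Set ℂ} (hFT : Disjoint F T) : ContinuousOn (segmentCoord a b) T :=
    fun z hz => (continuousAt_segmentCoord (hFT.ne_of_mem hb hz).symm).continuousWithinAt
  have hlogP := sub_log_eq_sub_log_of_exp_eq_mul hP (hg.mono subset_union_left) (hcont hFP).neg
    (fun z hz => neg_segmentCoord_mem_slitPlane_iff.2 (hPab.notMem_of_mem_right hz)) (k := 1)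
    (fun z hz => by rw [one_mul, hgexp z (Or.inl hz)]; rfl) hp.1 hq.1
  have hlogS := sub_log_eq_sub_log_of_exp_eq_mul hS (hg.mono subset_union_right) (hcont hFS)
    hSab (k := -1) (fun z hz => by rw [neg_one_mul, hgexp z (Or.inr hz)]) hp.2 hq.2
  simp only [Pi.neg_apply] at hlogP
  linear_combination hlogS - hlogP

lemma log_neg_sub_log_ne {w v : ℂ} (hw : 0 < w.im) (hv : v.im < 0) :
    log (-w) - log w ≠ log (-v) - log v := by
  intro h
  have him := congrArg im h
  simp only [sub_im, log_im, arg_neg_eq_arg_sub_pi_of_im_pos hw,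
    arg_neg_eq_arg_add_pi_of_im_neg hv] at him
  linarith [Real.pi_pos]

lemma joinedIn_of_connectedComponentIn_eq {X : Type*} [TopologicalSpace X]
    [LocallyPathConnectedSpace X] {U : Set X} (hU : IsOpen U) {p q : X} (hp : p ∈ U) (hq : q ∈ U)
    (hpq : connectedComponentIn U p = connectedComponentIn U q) : JoinedIn U p q := by
  have hpath : IsPathConnected (connectedComponentIn U p) :=
    hU.connectedComponentIn.isConnected_iff_isPathConnected.1
      (isConnected_connectedComponentIn_iff.2 hp)
  exact (hpath.joinedIn p (mem_connectedComponentIn hp) q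
    (hpq ▸ mem_connectedComponentIn hq)).mono (connectedComponentIn_subset U p)

lemma isCompact_segment {E : Type*} [AddCommGroup E] [Module ℝ E] [TopologicalSpace E]
    [ContinuousAdd E] [ContinuousSMul ℝ E] (a b : E) : IsCompact (segment ℝ a b) := by
  rw [segment_eq_image']
  exact isCompact_Icc.image (by fun_prop)

lemma connectedComponentIn_ne_of_segmentCoord_im {F S : Set ℂ} {a b p q : ℂ}
    (hF : IsPreconnected F) (hFc : IsClosed F) (ha : a ∈ F) (hb : b ∈ F)
    (hS : IsPreconnected S) (hSc : IsClosed S) (hFS : Disjoint F S)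
    (hSab : MapsTo (segmentCoord a b) S slitPlane) (hpS : p ∈ S) (hqS : q ∈ S)
    (hp : 0 < (segmentCoord a b p).im) (hq : (segmentCoord a b q).im < 0) :
    connectedComponentIn (F ∪ segment ℝ a b)ᶜ p ≠
      connectedComponentIn (F ∪ segment ℝ a b)ᶜ q := by
  intro hpq
  have hmem {z : ℂ} (hz : z ∈ S) (him : (segmentCoord a b z).im ≠ 0) :
      z ∈ (F ∪ segment ℝ a b)ᶜ :=
    not_or.2 ⟨hFS.notMem_of_mem_right hz, fun h => him (segmentCoord_im_eq_zero h)⟩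
  obtain ⟨γ, hγ⟩ := joinedIn_of_connectedComponentIn_eq
    (hFc.union (isCompact_segment a b).isClosed).isOpen_compl
    (hmem hpS hp.ne') (hmem hqS hq.ne) hpq
  have hdisj : Disjoint (F ∪ segment ℝ a b) (range γ) :=
    subset_compl_iff_disjoint_left.1 (range_subset_iff.2 hγ)
  rw [disjoint_union_left] at hdisj
  exact log_neg_sub_log_ne hp hq <| log_neg_segmentCoord_sub_log_segmentCoord_eq hF ha hb
    (isPreconnected_range γ.continuous) (isCompact_range γ.continuous).isClosed
    hdisj.1 hdisj.2 hS hSc hFS hSab ⟨⟨0, γ.source⟩, hpS⟩ ⟨⟨1, γ.target⟩, hqS⟩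

lemma exists_connectedComponentIn_ne {F : Set ℂ} (hF : IsPreconnected F) (hFc : IsClosed F)
    {a b : ℂ} (ha : a ∈ F) (hb : b ∈ F) (hab : ¬ segment ℝ a b ⊆ F) :
    ∃ p ∈ (F ∪ segment ℝ a b)ᶜ, ∃ q ∈ (F ∪ segment ℝ a b)ᶜ,
      connectedComponentIn (F ∪ segment ℝ a b)ᶜ p ≠
        connectedComponentIn (F ∪ segment ℝ a b)ᶜ q := by
  obtain ⟨c, hc, hcF⟩ := not_subset.1 hab
  have hca : c ≠ a := (ne_of_mem_of_not_mem ha hcF).symm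
  have hcb : c ≠ b := (ne_of_mem_of_not_mem hb hcF).symm
  have hne : a ≠ b := by
    rintro rfl
    exact hca (by simpa using hc)
  have hnear : ∀ᶠ z in 𝓝 c, z ∉ F ∧ segmentCoord a b z ∈ slitPlane :=
    (hFc.isOpen_compl.eventually_mem hcF).and
      ((continuousAt_segmentCoord hcb).eventually_mem
        (isOpen_slitPlane.mem_nhds (segmentCoord_mem_slitPlane hc hca hcb)))
  obtain ⟨δ, hδ, hball⟩ := nhds_basis_closedBall.eventually_iff.1 hnear
  have hballc := closedBall_mem_nhds c hδ
  obtain ⟨p, hp, hpS⟩ :=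
    ((frequently_segmentCoord_im_pos hne hc hcb).and_eventually hballc).exists
  obtain ⟨q, hq, hqS⟩ :=
    ((frequently_segmentCoord_im_neg hne hc hcb).and_eventually hballc).exists
  have hmem {z : ℂ} (hz : z ∈ closedBall c δ) (him : (segmentCoord a b z).im ≠ 0) :
      z ∈ (F ∪ segment ℝ a b)ᶜ :=
    not_or.2 ⟨(hball hz).1, fun h => him (segmentCoord_im_eq_zero h)⟩
  exact ⟨p, hmem hpS hp.ne', q, hmem hqS hq.ne, connectedComponentIn_ne_of_segmentCoord_im hF hFc
    ha hb (convex_closedBall c δ).isPreconnected isClosed_closedBall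
    (disjoint_right.2 fun z hz => (hball hz).1) (fun z hz => (hball hz).2) hpS hqS hp hq⟩

lemma exists_isBounded_connectedComponentIn_compl_union_segment_complex {F : Set ℂ}
    (hFcpt : IsCompact F) (hF : IsPreconnected F) {a b : ℂ} (ha : a ∈ F) (hb : b ∈ F)
    (hab : ¬ segment ℝ a b ⊆ F) :
    ∃ x ∈ (F ∪ segment ℝ a b)ᶜ,
      IsBounded (connectedComponentIn (F ∪ segment ℝ a b)ᶜ x) := by
  obtain ⟨p, hp, q, hq, hpq⟩ := exists_connectedComponentIn_ne hF hFcpt.isClosed ha hb hab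
  have hbdd : IsBounded (F ∪ segment ℝ a b)ᶜᶜ := by
    rw [compl_compl]
    exact (hFcpt.union (isCompact_segment a b)).isBounded
  obtain h | h := isBounded_connectedComponentIn_or (by simp) hbdd hpq
  exacts [⟨p, hp, h⟩, ⟨q, hq, h⟩]

end Separation

section Plane

open Bornology

variable {E : Type*} [NormedAddCommGroup E] [NormedSpace ℝ E]

lemma exists_isBounded_connectedComponentIn_compl_union_segment (hE : Module.finrank ℝ E = 2)
    {F : Set E} (hFcpt : IsCompact F) (hF : IsPreconnected F) {a b : E} (ha : a ∈ F) (hb : b ∈ F)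
    (hab : ¬ segment ℝ a b ⊆ F) :
    ∃ x ∈ (F ∪ segment ℝ a b)ᶜ,
      IsBounded (connectedComponentIn (F ∪ segment ℝ a b)ᶜ x) := by
  have : FiniteDimensional ℝ E := .of_finrank_pos (by simp [hE])
  let e : E ≃L[ℝ] ℂ := .ofFinrankEq (by simp [hE])
  have hseg : segment ℝ (e a) (e b) = e '' segment ℝ a b :=
    (image_segment ℝ e.toLinearMap.toAffineMap a b).symm
  have hcompl : (e '' F ∪ segment ℝ (e a) (e b))ᶜ = e '' (F ∪ segment ℝ a b)ᶜ := by
    rw [hseg, ← Set.image_union, Set.image_compl_eq e.bijective]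
  obtain ⟨_, hx, hbdd⟩ := exists_isBounded_connectedComponentIn_compl_union_segment_complex
    (hFcpt.image e.continuous) (hF.image e e.continuous.continuousOn)
    (Set.mem_image_of_mem e ha) (Set.mem_image_of_mem e hb)
    (by rwa [hseg, Set.image_subset_image_iff e.injective])
  rw [hcompl] at hx hbdd
  obtain ⟨x, hx, rfl⟩ := hx
  refine ⟨x, hx, ?_⟩
  have himage : e '' connectedComponentIn (F ∪ segment ℝ a b)ᶜ x =
      connectedComponentIn (e '' (F ∪ segment ℝ a b)ᶜ) (e x) :=
    e.toHomeomorph.image_connectedComponentIn hx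
  rw [← himage] at hbdd
  simpa [Set.image_image] using e.symm.lipschitz.isBounded_image hbdd

theorem exists_compact_in_line_bounded_component_general (hE : Module.finrank ℝ E = 2)
    {F : Set E} (hFcpt : IsCompact F) (hF : IsPreconnected F) (hFconv : ¬ Convex ℝ F) :
    ∃ K : Set E, IsCompact K ∧
      (∃ (φ : E →ₗ[ℝ] ℝ) (c : ℝ), φ ≠ 0 ∧ ∀ x ∈ K, φ x = c) ∧
      ∃ x ∈ (F ∪ K)ᶜ, IsBounded (connectedComponentIn (F ∪ K)ᶜ x) := by
  simp only [convex_iff_segment_subset, not_forall] at hFconv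
  obtain ⟨a, ha, b, hb, hab⟩ := hFconv
  exact ⟨segment ℝ a b, isCompact_segment a b,
    exists_linearMap_eq_const_of_vectorSpan_ne_top (vectorSpan_segment_ne_top (by simp [hE]) a b),
    exists_isBounded_connectedComponentIn_compl_union_segment hE hFcpt hF ha hb hab⟩

end Plane

/-- Let `F` be a compact connected subset of `ℝ²` with empty interior which is not
contained in any affine line. Then there exists a compact set `K ⊂ ℝ²` contained in an
affine line such that `(F ∪ K)ᶜ` has at least one bounded connected component. -/
theorem exists_compact_in_line_bounded_component
    (F : Set (EuclideanSpace ℝ (Fin 2)))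
    (hFcpt : IsCompact F) (hFconn : IsConnected F) (hFint : interior F = ∅)
    (hFline : ¬ ∃ (φ : EuclideanSpace ℝ (Fin 2) →ₗ[ℝ] ℝ) (c : ℝ),
      φ ≠ 0 ∧ ∀ x ∈ F, φ x = c) :
    ∃ K : Set (EuclideanSpace ℝ (Fin 2)), IsCompact K ∧
      (∃ (φ : EuclideanSpace ℝ (Fin 2) →ₗ[ℝ] ℝ) (c : ℝ), φ ≠ 0 ∧ ∀ x ∈ K, φ x = c) ∧
      ∃ x ∈ (F ∪ K)ᶜ, Bornology.IsBounded (connectedComponentIn (F ∪ K)ᶜ x) :=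
  exists_compact_in_line_bounded_component_general finrank_euclideanSpace_fin hFcpt
    hFconn.isPreconnected fun hconv => hFline <| exists_linearMap_eq_const_of_vectorSpan_ne_top <|
      vectorSpan_ne_top_of_convex_of_interior_eq_empty hconv hFconn.nonempty hFint
end
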